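/- (Overlap increment estimate.) Let ψ be the (σ,λ)-GFF on V_N, and for 0 ≤ α < α' ≤ 1 define the increments of overlaps q_{α,α'}^N(v,v') = E[ψ_v(α,α') ψ_{v'}] / (𝒥_{σ²}(1) log N + C_0). Then for every 0 ≤ α < α' ≤ 1 and ρ ∈ (0,1], there exist constants C_7 = C_7(σ,λ) > 0 and C_8 = C_8(α,α',σ,λ) > 0 such that for N large enough (dependent on α and α', but independent of ρ except when α = 0), max_{v,v'∈A_{N,ρ}} |q_{α,α'}^N(v,v') − 𝒥̄_{σ²}(α ∧ b_N(v,v'), α' ∧ b_N(v,v'))| ≤ C_7/√(log N) + C_8 ρ. -/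

import Mathlib

open Filter
open scoped Classical

noncomputable section GFFCommon

/-- Vertices of `ℤ²`. -/
abbrev Vtx : Type := ℤ × ℤ

/-- Sample space: a real-valued field indexed by the vertices of `ℤ²`. -/
abbrev FieldSp : Type := Vtx → ℝ

/-- The box `V_N = {0,1,…,N}²`. -/
def VN (N : ℕ) : Finset Vtx := Finset.Icc (0, 0) ((N : ℤ), (N : ℤ))

/-- The boundary `∂B` of a finite box `B ⊆ ℤ²`:
vertices of `B` having a (Euclidean distance 1) neighbour outside `B`. -/
def bdry (B : Finset Vtx) : Finset Vtx :=
  B.filter fun v =>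
    ¬((v.1 + 1, v.2) ∈ B ∧ (v.1 - 1, v.2) ∈ B ∧ (v.1, v.2 + 1) ∈ B ∧ (v.1, v.2 - 1) ∈ B)

/-- The interior `B° = B ∖ ∂B`. -/
def intr (B : Finset Vtx) : Finset Vtx := B \ bdry B

/-- The neighbourhood `[v]_λ` of `v` in `V_N`. -/
def nbhd (N : ℕ) (lam : ℝ) (v : Vtx) : Finset Vtx :=
  if lam = 0 then VN N
  else if lam = 1 then {v}
  else (VN N).filter fun w =>
    |(w.1 : ℝ) - (v.1 : ℝ)| ≤ (N : ℝ) ^ ((1 : ℝ) - lam) / 2 ∧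
    |(w.2 : ℝ) - (v.2 : ℝ)| ≤ (N : ℝ) ^ ((1 : ℝ) - lam) / 2

/-- The σ-algebra `F_{∂[v]_λ ∪ [v]_λ^c}`, generated by the field variables on the
boundary of `[v]_λ` and those outside of it. -/
def scaleAlg (N : ℕ) (lam : ℝ) (v : Vtx) : MeasurableSpace FieldSp :=
  ⨆ w ∈ {w : Vtx | w ∈ VN N ∧ w ∉ intr (nbhd N lam v)},
    MeasurableSpace.comap (fun ω : FieldSp => ω w) inferInstance

/-- `G` is the Green function of simple random walk killed on `∂B`, normalized by `π/2`:
it vanishes unless both arguments are in `B°`, and in `B°` it satisfies the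
first-step (discrete Poisson equation) characterization
`G(x,y) = (1/4)·Σ_{x'∼x} G(x',y) + (π/2)·1_{x=y}`. -/
def IsGreenFn (B : Finset Vtx) (G : Vtx → Vtx → ℝ) : Prop :=
  (∀ x y : Vtx, x ∉ intr B ∨ y ∉ intr B → G x y = 0) ∧
  ∀ y ∈ intr B, ∀ x ∈ intr B,
    G x y = (G (x.1 + 1, x.2) y + G (x.1 - 1, x.2) y
        + G (x.1, x.2 + 1) y + G (x.1, x.2 - 1) y) / 4
      + (Real.pi / 2) * (if x = y then 1 else 0)

/-- `P` is the law (on the canonical space `FieldSp`) of the Gaussian free field on `V_N`: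
a centered Gaussian field with covariance the Green function `G_{V_N}`. -/
def IsGFF (N : ℕ) (P : MeasureTheory.Measure FieldSp) : Prop :=
  MeasureTheory.IsProbabilityMeasure P ∧
  ∃ G : Vtx → Vtx → ℝ, IsGreenFn (VN N) G ∧
    ∀ c : Vtx → ℝ,
      P.map (fun ω => ∑ v ∈ VN N, c v * ω v) =
        ProbabilityTheory.gaussianReal 0 (Real.toNNReal (∑ v ∈ VN N, ∑ w ∈ VN N, c v * c w * G v w))

open MeasureTheory in
/-- `φ_v(λ) = E[φ_v | F_{∂[v]_λ ∪ [v]_λ^c}]`. -/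
def phiScale (N : ℕ) (P : MeasureTheory.Measure FieldSp) (v : Vtx) (lam : ℝ) : FieldSp → ℝ :=
  P[fun ω : FieldSp => ω v | scaleAlg N lam v]

/-- Admissible parameters `(σ,λ)`: `σ_1,…,σ_M > 0` and `0 = λ_0 < λ_1 < … < λ_M = 1`. -/
def ScaleParams (M : ℕ) (sigv lamv : ℕ → ℝ) : Prop :=
  1 ≤ M ∧ (∀ i ∈ Finset.Icc 1 M, 0 < sigv i) ∧
  lamv 0 = 0 ∧ lamv M = 1 ∧ ∀ i, i < M → lamv i < lamv (i + 1)

/-- The `(σ,λ)`-GFF: `ψ_v = Σ_{i=1}^M σ_i (φ_v(λ_i) − φ_v(λ_{i−1}))`. -/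
def psiFld (N M : ℕ) (sigv lamv : ℕ → ℝ) (P : MeasureTheory.Measure FieldSp) (v : Vtx) : FieldSp → ℝ :=
  fun ω => ∑ i ∈ Finset.Icc 1 M, sigv i * (phiScale N P v (lamv i) ω - phiScale N P v (lamv (i - 1)) ω)

open MeasureTheory in
/-- `ψ_v(λ) = E[ψ_v | F_{∂[v]_λ ∪ [v]_λ^c}]`. -/
def psiScale (N M : ℕ) (sigv lamv : ℕ → ℝ) (P : MeasureTheory.Measure FieldSp) (v : Vtx) (lam : ℝ) :
    FieldSp → ℝ :=
  P[psiFld N M sigv lamv P v | scaleAlg N lam v]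

/-- The increment `ψ_v(λ,λ') = ψ_v(λ') − ψ_v(λ)`. -/
def psiInc (N M : ℕ) (sigv lamv : ℕ → ℝ) (P : MeasureTheory.Measure FieldSp) (v : Vtx) (lam lam' : ℝ) :
    FieldSp → ℝ :=
  fun ω => psiScale N M sigv lamv P v lam' ω - psiScale N M sigv lamv P v lam ω

/-- The step function `σ(s) = σ_1 1_{{0}}(s) + Σ_{i=1}^M σ_i 1_{(λ_{i−1},λ_i]}(s)`. -/
def stepFn (M : ℕ) (sigv lamv : ℕ → ℝ) (s : ℝ) : ℝ :=
  (if s = 0 then sigv 1 else 0) +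
  ∑ i ∈ Finset.Icc 1 M, if lamv (i - 1) < s ∧ s ≤ lamv i then sigv i else 0

/-- `𝒥_f(s) = ∫_0^s f(r) dr`. -/
def Jint (f : ℝ → ℝ) (s : ℝ) : ℝ := ∫ r in (0:ℝ)..s, f r

/-- `𝒥_f(s₁,s₂) = ∫_{s₁}^{s₂} f(r) dr`. -/
def Jint2 (f : ℝ → ℝ) (s₁ s₂ : ℝ) : ℝ := ∫ r in s₁..s₂, f r

/-- The speed function `𝒥_{σ²}`. -/
def Jsig2 (M : ℕ) (sigv lamv : ℕ → ℝ) (s : ℝ) : ℝ := Jint (fun r => (stepFn M sigv lamv r) ^ 2) s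

/-- The normalized speed function `𝒥̄_{σ²} = 𝒥_{σ²}/𝒥_{σ²}(1)`. -/
def JsigBar (M : ℕ) (sigv lamv : ℕ → ℝ) (s : ℝ) : ℝ := Jsig2 M sigv lamv s / Jsig2 M sigv lamv 1

/-- The concave hull on `[0,1]` of a function `f`, i.e. the pointwise infimum over all
concave functions dominating `f` on `[0,1]`. -/
def concaveHull (f : ℝ → ℝ) (s : ℝ) : ℝ :=
  sInf {y | ∃ g : ℝ → ℝ, ConcaveOn ℝ (Set.Icc (0:ℝ) 1) g ∧
    (∀ t ∈ Set.Icc (0:ℝ) 1, f t ≤ g t) ∧ y = g s}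

/-- The effective parameters: jump scales `0 = λ⁰ < … < λ^m = 1`, values
`σ̄_1 > … > σ̄_m > 0`, and the left-continuous non-increasing step function `σ̄`
such that `∫_0^s σ̄²` is the concavification of `𝒥_{σ²}`. -/
def EffParams (M : ℕ) (sigv lamv : ℕ → ℝ) (m : ℕ) (sigb lamb : ℕ → ℝ) (sigbar : ℝ → ℝ) : Prop :=
  1 ≤ m ∧ m ≤ M ∧ lamb 0 = 0 ∧ lamb m = 1 ∧ (∀ j, j < m → lamb j < lamb (j + 1)) ∧
  (∀ l, 1 ≤ l → l < m → sigb (l + 1) < sigb l) ∧ (∀ l ∈ Finset.Icc 1 m, 0 < sigb l) ∧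
  sigbar 0 = sigb 1 ∧
  (∀ l ∈ Finset.Icc 1 m, ∀ s : ℝ, lamb (l - 1) < s → s ≤ lamb l → sigbar s = sigb l) ∧
  (∀ s : ℝ, 0 < s → s ≤ 1 →
    concaveHull (Jsig2 M sigv lamv) s = ∫ r in (0:ℝ)..s, (sigbar r) ^ 2)

/-- `γ* = 𝒥_{σ²/σ̄}(1)`. -/
def gammaStar (M : ℕ) (sigv lamv : ℕ → ℝ) (sigbar : ℝ → ℝ) : ℝ :=
  ∫ s in (0:ℝ)..1, (stepFn M sigv lamv s) ^ 2 / sigbar s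

/-- The critical levels `γ^l = ∫_0^1 σ²(s)/σ̄(s ∧ λ^l) ds`, `γ⁰ = 0`. -/
def gammaL (M : ℕ) (sigv lamv : ℕ → ℝ) (lamb : ℕ → ℝ) (sigbar : ℝ → ℝ) (l : ℕ) : ℝ :=
  if l = 0 then 0 else ∫ s in (0:ℝ)..1, (stepFn M sigv lamv s) ^ 2 / sigbar (min s (lamb l))

/-- `EntE` is the entropy function `𝓔` of the model. -/
def IsEntropy (M : ℕ) (sigv lamv : ℕ → ℝ) (m : ℕ) (lamb : ℕ → ℝ) (sigbar : ℝ → ℝ)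
    (EntE : ℝ → ℝ) : Prop :=
  EntE 0 = 1 ∧
  ∀ l ∈ Finset.Icc 1 m, ∀ γ : ℝ,
    gammaL M sigv lamv lamb sigbar (l - 1) < γ → γ ≤ gammaL M sigv lamv lamb sigbar l →
      EntE γ = (1 - lamb (l - 1)) -
        (γ - ∫ s in (0:ℝ)..(lamb (l - 1)), (stepFn M sigv lamv s) ^ 2 / sigbar s) ^ 2 /
          Jint2 (fun r => (stepFn M sigv lamv r) ^ 2) (lamb (l - 1)) 1

/-- The limiting free energy of the `REM(σ)` model. -/
def fREM (σ β : ℝ) : ℝ :=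
  if (2 / σ) < β then 2 * (β / (2 / σ)) else 1 + (β / (2 / σ)) ^ 2

/-- The index `l_β`. -/
def lbeta (m : ℕ) (sigb : ℕ → ℝ) (β : ℝ) : ℕ :=
  if β ≤ 2 / sigb m then sInf {l : ℕ | 1 ≤ l ∧ β ≤ 2 / sigb l} else m + 1

/-- The limiting free energy `f^ψ(β)`, written with the `l_β` split. -/
def fpsiLim (m : ℕ) (sigb lamb : ℕ → ℝ) (β : ℝ) : ℝ :=
  (∑ j ∈ Finset.Icc 1 (lbeta m sigb β - 1), (2 * β / (2 / sigb j)) * (lamb j - lamb (j - 1))) +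
  ∑ j ∈ Finset.Icc (lbeta m sigb β) m, (1 + β ^ 2 / (2 / sigb j) ^ 2) * (lamb j - lamb (j - 1))

/-- The set `ℬ` of non-critical inverse temperatures. -/
def critSet (m : ℕ) (sigb : ℕ → ℝ) : Set ℝ :=
  {β | 0 < β ∧ ∀ j ∈ Finset.Icc 1 m, β ≠ 2 / sigb j}

/-- The partition function `Z_N^ψ(β)`. -/
def ZN (N M : ℕ) (sigv lamv : ℕ → ℝ) (P : MeasureTheory.Measure FieldSp) (β : ℝ) (ω : FieldSp) : ℝ :=
  ∑ v ∈ VN N, Real.exp (β * psiFld N M sigv lamv P v ω)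

/-- The free energy `f_N^ψ(β)` on `V_N`. -/
def freeEnergy (N M : ℕ) (sigv lamv : ℕ → ℝ) (P : MeasureTheory.Measure FieldSp) (β : ℝ) (ω : FieldSp) : ℝ :=
  (Real.log ((N : ℝ) ^ 2))⁻¹ * Real.log (ZN N M sigv lamv P β ω)

/-- The set `A_{N,ρ}` of points at distance at least `N^{1−ρ}` from `ℤ² ∖ V_N`. -/
def AN (N : ℕ) (ρ : ℝ) : Finset Vtx :=
  (VN N).filter fun v => ∀ z : Vtx, z ∉ VN N →
    (N : ℝ) ^ ((1 : ℝ) - ρ) ≤ Real.sqrt (((v.1 : ℝ) - (z.1 : ℝ)) ^ 2 + ((v.2 : ℝ) - (z.2 : ℝ)) ^ 2)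

/-- The restricted partition function `Z_{N,ρ}^ψ(β)`. -/
def ZNres (N M : ℕ) (sigv lamv : ℕ → ℝ) (P : MeasureTheory.Measure FieldSp) (β ρ : ℝ) (ω : FieldSp) : ℝ :=
  ∑ v ∈ AN N ρ, Real.exp (β * psiFld N M sigv lamv P v ω)

/-- The free energy `f_{N,ρ}^ψ(β)` on `A_{N,ρ}`. -/
def freeEnergyRes (N M : ℕ) (sigv lamv : ℕ → ℝ) (P : MeasureTheory.Measure FieldSp) (β ρ : ℝ)
    (ω : FieldSp) : ℝ :=
  (Real.log ((N : ℝ) ^ 2))⁻¹ * Real.log (ZNres N M sigv lamv P β ρ ω)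

/-- The Gibbs weight `𝒢_{β,N}({v})`. -/
def gibbsW (N M : ℕ) (sigv lamv : ℕ → ℝ) (P : MeasureTheory.Measure FieldSp) (β : ℝ) (v : Vtx)
    (ω : FieldSp) : ℝ :=
  Real.exp (β * psiFld N M sigv lamv P v ω) / ZN N M sigv lamv P β ω

/-- The restricted Gibbs weight `𝒢_{β,N,ρ}({v})`. -/
def gibbsWres (N M : ℕ) (sigv lamv : ℕ → ℝ) (P : MeasureTheory.Measure FieldSp) (β ρ : ℝ) (v : Vtx)
    (ω : FieldSp) : ℝ :=
  Real.exp (β * psiFld N M sigv lamv P v ω) / ZNres N M sigv lamv P β ρ ω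

/-- `E𝒢_{β,N}^{×s}[F]`: the mean over the disorder of the `s`-fold Gibbs average of `F`. -/
def gibbsExp (N M : ℕ) (sigv lamv : ℕ → ℝ) (P : MeasureTheory.Measure FieldSp) (β : ℝ) (s : ℕ)
    (F : (Fin s → Vtx) → ℝ) : ℝ :=
  ∫ ω, (∑ vv ∈ Fintype.piFinset (fun _ : Fin s => VN N),
    (∏ i, gibbsW N M sigv lamv P β (vv i) ω) * F vv) ∂P

/-- `E𝒢_{β,N,ρ}^{×s}[F]`, with an `ω`-dependent integrand allowed. -/
def gibbsExpRes (N M : ℕ) (sigv lamv : ℕ → ℝ) (P : MeasureTheory.Measure FieldSp) (β ρ : ℝ) (s : ℕ)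
    (F : (Fin s → Vtx) → FieldSp → ℝ) : ℝ :=
  ∫ ω, (∑ vv ∈ Fintype.piFinset (fun _ : Fin s => AN N ρ),
    (∏ i, gibbsWres N M sigv lamv P β ρ (vv i) ω) * F vv ω) ∂P

/-- `E𝒢_{β,N}^{×s}[F]`, with an `ω`-dependent integrand allowed. -/
def gibbsExpW (N M : ℕ) (sigv lamv : ℕ → ℝ) (P : MeasureTheory.Measure FieldSp) (β : ℝ) (s : ℕ)
    (F : (Fin s → Vtx) → FieldSp → ℝ) : ℝ :=
  ∫ ω, (∑ vv ∈ Fintype.piFinset (fun _ : Fin s => VN N),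
    (∏ i, gibbsW N M sigv lamv P β (vv i) ω) * F vv ω) ∂P

/-- The covariance `E[ψ_v ψ_{v'}]`. -/
def psiCov (N M : ℕ) (sigv lamv : ℕ → ℝ) (P : MeasureTheory.Measure FieldSp) (v v' : Vtx) : ℝ :=
  ∫ ω, psiFld N M sigv lamv P v ω * psiFld N M sigv lamv P v' ω ∂P

/-- `C₀` is a constant witnessing the uniform variance upper bound
`max_{v∈V_N} E[ψ_v²] ≤ 𝒥_{σ²}(1) log N + C₀` for `N` large. -/
def IsVarBound (M : ℕ) (sigv lamv : ℕ → ℝ) (P : ℕ → MeasureTheory.Measure FieldSp) (C₀ : ℝ) : Prop :=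
  0 < C₀ ∧ ∃ N₀ : ℕ, ∀ N ≥ N₀, ∀ v ∈ VN N,
    psiCov N M sigv lamv (P N) v v ≤ Jsig2 M sigv lamv 1 * Real.log N + C₀

/-- The overlap `q^N(v,v')`. -/
def overlapQ (N M : ℕ) (sigv lamv : ℕ → ℝ) (P : MeasureTheory.Measure FieldSp) (C₀ : ℝ) (v v' : Vtx) : ℝ :=
  psiCov N M sigv lamv P v v' / (Jsig2 M sigv lamv 1 * Real.log N + C₀)

/-- Convergence in probability to a constant, for a sequence of random variables on a
sequence of probability spaces. -/
def TendstoInProb (P : ℕ → MeasureTheory.Measure FieldSp) (X : ℕ → FieldSp → ℝ) (c : ℝ) : Prop :=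
  ∀ ε : ℝ, 0 < ε → Tendsto (fun N => P N {ω | ε < |X N ω - c|}) atTop (nhds 0)

/-- Convergence in `L^p` to a constant. -/
def TendstoLp (P : ℕ → MeasureTheory.Measure FieldSp) (X : ℕ → FieldSp → ℝ) (p c : ℝ) : Prop :=
  Tendsto (fun N => ∫ ω, |X N ω - c| ^ p ∂(P N)) atTop (nhds 0)

/-- The branching scale `b_N(v,v')`. -/
def bScale (N : ℕ) (v v' : Vtx) : ℝ :=
  sSup {lam : ℝ | lam ∈ Set.Icc (0:ℝ) 1 ∧ ((nbhd N lam v) ∩ (nbhd N lam v')).Nonempty}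

end GFFCommon

/-!
Conditioning the free field on its values outside a box removes from a linear functional of the
field exactly the part carried by the Green function of that box. Hence each `ψ_v(α)` is almost
surely the Dirichlet inner product of the field with the potential
`∑ i ∈ {0, …, M}, (σ_{i+1} - σ_i) G_{[v]_{min λ_i α}}(v, ·)`, where `σ_0 = σ_{M+1} = 0`, and
covariances of such functionals are Dirichlet inner products of their potentials.

The Dirichlet inner product of the Green functions of `[v]_λ` and `[v']_λ'` is
`(b_N(v, v') - max λ λ')⁺ log N + O(1 + ρ log N)`: the potential kernel of `ℤ²` is
`log |x| + O(1)`, so a Green function is a truncated logarithm up to bounded error, and two of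
them interact only through the part that both see beyond the distance `|v - v'|`. Summing over the
jumps of `σ`, a layer-cake identity turns the main terms into `∫ σ²` between `min α b_N` and
`min α' b_N`.
-/

noncomputable section NearestNeighbourAverage

/-- The four nearest-neighbour steps `±e₁, ±e₂` of `ℤ²`. -/
def unitSteps : Finset Vtx := {(1, 0), (-1, 0), (0, 1), (0, -1)}

lemma sum_unitSteps {E : Type*} [AddCommMonoid E] (F : Vtx → E) :
    ∑ e ∈ unitSteps, F e = F (1, 0) + (F (-1, 0) + (F (0, 1) + F (0, -1))) := by
  simp [unitSteps]

lemma neg_mem_unitSteps {e : Vtx} (he : e ∈ unitSteps) : -e ∈ unitSteps := by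
  simp only [unitSteps, Finset.mem_insert, Finset.mem_singleton] at he ⊢
  rcases he with rfl | rfl | rfl | rfl <;> simp

/-- The nearest-neighbour average `x ↦ (1/4)·Σ_{y∼x} f(y)`, i.e. one step of simple random walk on
`ℤ²`, as a linear operator. -/
def nbrAvg : (Vtx → ℝ) →ₗ[ℝ] Vtx → ℝ where
  toFun f x := (∑ e ∈ unitSteps, f (x + e)) / 4
  map_add' f g := by
    ext x
    simp only [Pi.add_apply, Finset.sum_add_distrib, add_div]
  map_smul' c f := by
    ext x
    simp only [Pi.smul_apply, smul_eq_mul, RingHom.id_apply, ← Finset.mul_sum, mul_div_assoc]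

lemma nbrAvg_apply (f : Vtx → ℝ) (x : Vtx) : nbrAvg f x = (∑ e ∈ unitSteps, f (x + e)) / 4 :=
  rfl

lemma nbrAvg_eq (f : Vtx → ℝ) (x : Vtx) :
    nbrAvg f x =
      (f (x.1 + 1, x.2) + f (x.1 - 1, x.2) + f (x.1, x.2 + 1) + f (x.1, x.2 - 1)) / 4 := by
  obtain ⟨a, b⟩ := x
  simp only [nbrAvg_apply, sum_unitSteps, Prod.mk_add_mk, add_zero, ← sub_eq_add_neg, add_assoc]

end NearestNeighbourAverage

/-! ### The potential kernel -/

noncomputable section PotentialKernel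

open Real MeasureTheory

/-- The decay rate `κ(t) ≥ 0` with `cosh κ(t) + cos t = 2`, so that `e^{-κ(t) x₁} cos (t x₂)` is
discrete harmonic. -/
def decayRate (t : ℝ) : ℝ := arcosh (2 - cos t)

lemma one_le_two_sub_cos (t : ℝ) : 1 ≤ 2 - cos t := by linarith [cos_le_one t]

lemma cosh_decayRate (t : ℝ) : cosh (decayRate t) = 2 - cos t :=
  cosh_arcosh (one_le_two_sub_cos t)

lemma decayRate_nonneg (t : ℝ) : 0 ≤ decayRate t := arcosh_nonneg (one_le_two_sub_cos t)

lemma sinh_decayRate_nonneg (t : ℝ) : 0 ≤ sinh (decayRate t) :=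
  sinh_nonneg_iff.2 (decayRate_nonneg t)

lemma sinh_sq_decayRate (t : ℝ) : sinh (decayRate t) ^ 2 = (2 - cos t) ^ 2 - 1 := by
  rw [sinh_sq, cosh_decayRate]

lemma half_le_sinh_decayRate {t : ℝ} (h0 : 0 ≤ t) (hpi : t ≤ π) :
    t / 2 ≤ sinh (decayRate t) := by
  refine (sq_le_sq₀ (by positivity) (sinh_decayRate_nonneg t)).1 ?_
  have hcos := cos_le_one_sub_mul_cos_sq (x := t) (by rwa [abs_of_nonneg h0])
  have hconst : 1 / 8 ≤ 2 / π ^ 2 := by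
    rw [div_le_div_iff₀ (by norm_num) (by positivity)]
    nlinarith [pi_pos, pi_le_four]
  have hquad : 1 / 8 * t ^ 2 ≤ 2 / π ^ 2 * t ^ 2 := by gcongr
  rw [sinh_sq_decayRate]
  nlinarith [cos_le_one t]

lemma sinh_decayRate_pos {t : ℝ} (h0 : 0 < t) (hpi : t ≤ π) : 0 < sinh (decayRate t) :=
  (half_pos h0).trans_le (half_le_sinh_decayRate h0.le hpi)

lemma decayRate_monotoneOn : MonotoneOn decayRate (Set.Icc 0 π) := by
  intro s hs t ht hst
  refine (arcosh_le_arcosh (by linarith [one_le_two_sub_cos s])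
    (by linarith [one_le_two_sub_cos t])).2 ?_
  linarith [cos_le_cos_of_nonneg_of_le_pi hs.1 ht.2 hst]

lemma continuous_decayRate : Continuous decayRate :=
  continuousOn_arcosh.comp_continuous (by fun_prop) one_le_two_sub_cos

lemma differentiableAt_decayRate {t : ℝ} (h0 : 0 < t) (hpi : t ≤ π) :
    DifferentiableAt ℝ decayRate t := by
  have hcos : cos t < 1 := by
    simpa using cos_lt_cos_of_nonneg_of_le_pi le_rfl hpi h0
  exact (differentiableAt_arcosh (Set.mem_Ioi.2 (by linarith))).comp t (by fun_prop)

/-- The integrand of the Fourier representation of the potential kernel of simple random walk. -/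
def potentialIntegrand (x : Vtx) (t : ℝ) : ℝ :=
  (1 - exp (-(decayRate t * |(x.1 : ℝ)|)) * cos (x.2 * t)) / sinh (decayRate t)

/-- The potential kernel of simple random walk on `ℤ²`, normalised so that
`nbrAvg a - a = (π/2)·1_{0}`. -/
def potentialKernel (x : Vtx) : ℝ := ∫ t in (0 : ℝ)..π, potentialIntegrand x t

lemma potentialIntegrand_nonneg (x : Vtx) (t : ℝ) : 0 ≤ potentialIntegrand x t := by
  refine div_nonneg ?_ (sinh_decayRate_nonneg t)
  have hexp : exp (-(decayRate t * |(x.1 : ℝ)|)) ≤ 1 :=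
    exp_le_one_iff.2 (neg_nonpos.2 (mul_nonneg (decayRate_nonneg t) (abs_nonneg _)))
  nlinarith [cos_le_one (x.2 * t), exp_pos (-(decayRate t * |(x.1 : ℝ)|))]

lemma one_sub_cos_le_abs (y : ℝ) : 1 - cos y ≤ |y| := by
  rcases le_total |y| 2 with h | h
  · nlinarith [one_sub_sq_div_two_le_cos (x := y), sq_abs y, abs_nonneg y]
  · linarith [neg_one_le_cos y]

lemma potentialIntegrand_le (x : Vtx) {t : ℝ} (h0 : 0 ≤ t) (hpi : t ≤ π) :
    potentialIntegrand x t ≤ 3 * ‖x‖ := by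
  refine div_le_of_le_mul₀ (sinh_decayRate_nonneg t) (by positivity) ?_
  have hx₁ : |(x.1 : ℝ)| ≤ ‖x‖ := norm_fst_le x
  have hx₂ : |(x.2 : ℝ)| ≤ ‖x‖ := norm_snd_le x
  have hexp : 1 - exp (-(decayRate t * |(x.1 : ℝ)|)) ≤ sinh (decayRate t) * ‖x‖ := by
    have hself : decayRate t ≤ sinh (decayRate t) := self_le_sinh_iff.2 (decayRate_nonneg t)
    calc 1 - exp (-(decayRate t * |(x.1 : ℝ)|)) ≤ decayRate t * |(x.1 : ℝ)| := by
          linarith [add_one_le_exp (-(decayRate t * |(x.1 : ℝ)|))]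
      _ ≤ sinh (decayRate t) * ‖x‖ := by
          gcongr
          exact sinh_decayRate_nonneg t
  have hcos : 1 - cos (x.2 * t) ≤ 2 * sinh (decayRate t) * ‖x‖ := by
    calc 1 - cos (x.2 * t) ≤ |(x.2 : ℝ)| * t := by
          simpa only [abs_mul, abs_of_nonneg h0] using one_sub_cos_le_abs (x.2 * t)
      _ ≤ ‖x‖ * (2 * sinh (decayRate t)) := by
          gcongr
          linarith [half_le_sinh_decayRate h0 hpi]
      _ = 2 * sinh (decayRate t) * ‖x‖ := by ring
  have hle : exp (-(decayRate t * |(x.1 : ℝ)|)) ≤ 1 :=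
    exp_le_one_iff.2 (neg_nonpos.2 (mul_nonneg (decayRate_nonneg t) (abs_nonneg _)))
  nlinarith [cos_le_one (x.2 * t), exp_pos (-(decayRate t * |(x.1 : ℝ)|))]

lemma measurable_potentialIntegrand (x : Vtx) : Measurable (potentialIntegrand x) := by
  have := continuous_decayRate
  unfold potentialIntegrand
  exact Measurable.div (by fun_prop) (by fun_prop)

lemma intervalIntegrable_potentialIntegrand (x : Vtx) {a b : ℝ} (ha : 0 ≤ a) (hab : a ≤ b)
    (hb : b ≤ π) : IntervalIntegrable (potentialIntegrand x) volume a b := by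
  rw [intervalIntegrable_iff_integrableOn_Ioc_of_le hab]
  refine Measure.integrableOn_of_bounded (M := 3 * ‖x‖) measure_Ioc_lt_top.ne
    (measurable_potentialIntegrand x).aestronglyMeasurable ?_
  filter_upwards [ae_restrict_mem measurableSet_Ioc] with t ht
  rw [norm_of_nonneg (potentialIntegrand_nonneg x t)]
  exact potentialIntegrand_le x (ha.trans ht.1.le) (ht.2.trans hb)

lemma potentialKernel_zero : potentialKernel 0 = 0 := by
  simp [potentialKernel, potentialIntegrand]

lemma exp_neg_mul_abs_add_one_add_sub_one (κ : ℝ) (m : ℤ) :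
    exp (-(κ * |((m + 1 : ℤ) : ℝ)|)) + exp (-(κ * |((m - 1 : ℤ) : ℝ)|)) =
      2 * cosh κ * exp (-(κ * |(m : ℝ)|)) - if m = 0 then 2 * sinh κ else 0 := by
  have hrec (r : ℝ) : exp (-(κ * (r + 1))) + exp (-(κ * (r - 1))) =
      2 * cosh κ * exp (-(κ * r)) := by
    rw [cosh_eq, mul_div_cancel₀ _ two_ne_zero, add_mul, ← exp_add, ← exp_add, add_comm]
    ring_nf
  rcases lt_trichotomy m 0 with hm | rfl | hm
  · have h₁ : |((m + 1 : ℤ) : ℝ)| = |(m : ℝ)| - 1 := by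
      rw [abs_of_nonpos (by exact_mod_cast hm), abs_of_neg (by exact_mod_cast hm)]
      push_cast
      ring
    have h₂ : |((m - 1 : ℤ) : ℝ)| = |(m : ℝ)| + 1 := by
      rw [abs_of_neg (by exact_mod_cast (by lia : m - 1 < 0)), abs_of_neg (by exact_mod_cast hm)]
      push_cast
      ring
    rw [h₁, h₂, if_neg hm.ne, sub_zero, ← hrec, add_comm]
  · simp only [zero_add, zero_sub, Int.cast_neg, Int.cast_one, abs_neg, abs_one, mul_one,
      Int.cast_zero, abs_zero, mul_zero, neg_zero, exp_zero, if_true, cosh_eq, sinh_eq]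
    ring
  · have h₁ : |((m + 1 : ℤ) : ℝ)| = |(m : ℝ)| + 1 := by
      rw [abs_of_pos (by exact_mod_cast (by lia : 0 < m + 1)), abs_of_pos (by exact_mod_cast hm)]
      push_cast
      ring
    have h₂ : |((m - 1 : ℤ) : ℝ)| = |(m : ℝ)| - 1 := by
      rw [abs_of_nonneg (by exact_mod_cast (by lia : 0 ≤ m - 1)),
        abs_of_pos (by exact_mod_cast hm)]
      push_cast
      ring
    rw [h₁, h₂, if_neg hm.ne', sub_zero, ← hrec]

lemma nbrAvg_potentialIntegrand (x : Vtx) {t : ℝ} (h0 : 0 < t) (hpi : t ≤ π) :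
    nbrAvg (fun y ↦ potentialIntegrand y t) x =
      potentialIntegrand x t + if x.1 = 0 then cos (x.2 * t) / 2 else 0 := by
  have hsinh := (sinh_decayRate_pos h0 hpi).ne'
  have hexp := exp_neg_mul_abs_add_one_add_sub_one (decayRate t) x.1
  have hcos : cos ((x.2 + 1 : ℤ) * t) + cos ((x.2 - 1 : ℤ) * t) = 2 * cos t * cos (x.2 * t) := by
    push_cast
    rw [add_mul, sub_mul, one_mul, cos_add, cos_sub]
    ring
  have hcosh := cosh_decayRate t
  simp only [nbrAvg_eq, potentialIntegrand]
  rw [← add_div, ← add_div, ← add_div, div_div, div_eq_iff (mul_ne_zero hsinh four_ne_zero),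
    add_mul, ← mul_assoc, div_mul_cancel₀ _ hsinh]
  split_ifs at hexp ⊢ <;>
    linear_combination -cos (x.2 * t) * hexp - exp (-(decayRate t * |(x.1 : ℝ)|)) * hcos -
      2 * cos (x.2 * t) * exp (-(decayRate t * |(x.1 : ℝ)|)) * hcosh

lemma nbrAvg_potentialKernel (x : Vtx) :
    nbrAvg potentialKernel x = potentialKernel x + π / 2 * if x = 0 then 1 else 0 := by
  have hint (y : Vtx) : IntervalIntegrable (potentialIntegrand y) volume 0 π :=
    intervalIntegrable_potentialIntegrand y le_rfl pi_pos.le le_rfl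
  have hcos : IntervalIntegrable (fun t ↦ if x.1 = 0 then cos (x.2 * t) / 2 else 0) volume 0 π := by
    apply Continuous.intervalIntegrable
    split_ifs <;> fun_prop
  have hpole : ∫ t in (0 : ℝ)..π, (if x.1 = 0 then cos (x.2 * t) / 2 else 0) =
      π / 2 * if x = 0 then 1 else 0 := by
    obtain ⟨m, n⟩ := x
    by_cases hm : m = 0 <;> by_cases hn : n = 0 <;> simp [hm, hn]
    ring
  calc nbrAvg potentialKernel x
      = ∫ t in (0 : ℝ)..π, nbrAvg (fun y ↦ potentialIntegrand y t) x := by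
        simp only [nbrAvg_eq, potentialKernel]
        rw [intervalIntegral.integral_div,
          intervalIntegral.integral_add (((hint _).add (hint _)).add (hint _)) (hint _),
          intervalIntegral.integral_add ((hint _).add (hint _)) (hint _),
          intervalIntegral.integral_add (hint _) (hint _)]
    _ = ∫ t in (0 : ℝ)..π,
          (potentialIntegrand x t + if x.1 = 0 then cos (x.2 * t) / 2 else 0) := by
        refine intervalIntegral.integral_congr_ae (.of_forall fun t ht ↦ ?_)
        rw [Set.uIoc_of_le pi_pos.le] at ht
        exact nbrAvg_potentialIntegrand x ht.1 ht.2
    _ = potentialKernel x + π / 2 * if x = 0 then 1 else 0 := by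
        rw [intervalIntegral.integral_add (hint x) hcos, hpole, potentialKernel]

lemma abs_one_div_sinh_decayRate_sub_one_div_le {t : ℝ} (h0 : 0 < t) (hpi : t ≤ π) :
    |1 / sinh (decayRate t) - 1 / t| ≤ 8 := by
  set w := sinh (decayRate t)
  have hw : 0 < w := sinh_decayRate_pos h0 hpi
  have hlower : t ^ 2 - t ^ 4 ≤ 2 * (1 - cos t) := by
    rcases le_total t 1 with h | h
    · have hbound := cos_bound (x := t) (by rwa [abs_of_pos h0])
      rw [abs_of_pos h0] at hbound
      linarith [(abs_le.1 hbound).2, pow_pos h0 4]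
    · linarith [pow_le_pow_right₀ h (by norm_num : 2 ≤ 4), cos_le_one t]
  have hupper : 1 - cos t ≤ t ^ 2 / 2 := by linarith [one_sub_sq_div_two_le_cos (x := t)]
  have hsq : w ^ 2 = 2 * (1 - cos t) + (1 - cos t) ^ 2 := by
    rw [sinh_sq_decayRate]
    ring
  have hdiff : |t ^ 2 - w ^ 2| ≤ t ^ 4 := by
    rw [abs_le, hsq]
    constructor <;> nlinarith [cos_le_one t, sq_nonneg (1 - cos t), sq_nonneg t]
  have hden : t ^ 4 ≤ 8 * (t * w * (t + w)) := by
    have hhalf : t * (t / 2) * t ≤ t * w * (t + w) := by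
      gcongr
      · exact half_le_sinh_decayRate h0.le hpi
      · linarith
    nlinarith [pow_pos h0 3, hpi.trans pi_le_four]
  have heq : 1 / w - 1 / t = (t ^ 2 - w ^ 2) / (t * w * (t + w)) := by
    field_simp
    ring
  rw [heq, abs_div, abs_of_pos (by positivity : 0 < t * w * (t + w)), div_le_iff₀ (by positivity)]
  exact hdiff.trans hden

lemma abs_integral_deriv_mul_le_of_antitoneOn {f g : ℝ → ℝ} {a b C : ℝ} (hab : a ≤ b)
    (hg : AntitoneOn g (Set.Icc a b)) (hf : ∀ t, |f t| ≤ C) :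
    |∫ t in a..b, deriv g t * f t| ≤ (g a - g b) * C := by
  have hmono : MonotoneOn (-g) (Set.uIcc a b) := by
    rw [Set.uIcc_of_le hab]
    exact hg.neg
  have hga : g b ≤ g a := hg ⟨le_rfl, hab⟩ ⟨hab, le_rfl⟩ hab
  have htotal : ∫ t in a..b, deriv (-g) t ≤ g a - g b := by
    have h := hmono.intervalIntegral_deriv_mem_uIcc
    simp only [Pi.neg_apply, neg_sub_neg] at h
    rw [Set.uIcc_of_le (sub_nonneg.2 hga)] at h
    exact h.2
  calc |∫ t in a..b, deriv g t * f t| ≤ ∫ t in a..b, deriv (-g) t * C := by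
        rw [← norm_eq_abs]
        refine intervalIntegral.norm_integral_le_of_norm_le hab ?_
          (hmono.intervalIntegrable_deriv.mul_const C)
        filter_upwards [Measure.ae_ne volume b] with t htb ht
        have hneg : deriv g t ≤ 0 := by
          rw [← derivWithin_of_mem_nhds (Icc_mem_nhds ht.1 (ht.2.lt_of_ne htb))]
          exact hg.derivWithin_nonpos
        rw [norm_mul, norm_of_nonpos hneg, deriv.neg']
        exact mul_le_mul_of_nonneg_left (hf t) (neg_nonneg.2 hneg)
    _ ≤ (g a - g b) * C := by
        rw [intervalIntegral.integral_mul_const]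
        exact mul_le_mul_of_nonneg_right htotal ((abs_nonneg _).trans (hf a))

lemma abs_integral_mul_cos_le {g : ℝ → ℝ} {a b ω : ℝ} (hω : 0 < ω) (hab : a ≤ b)
    (hanti : AntitoneOn g (Set.Icc a b)) (hdiff : ∀ t ∈ Set.Icc a b, DifferentiableAt ℝ g t)
    (hgb : 0 ≤ g b) : |∫ t in a..b, g t * cos (ω * t)| ≤ 2 * g a / ω := by
  have hsin (t : ℝ) : |sin (ω * t) / ω| ≤ 1 / ω := by
    rw [abs_div, abs_of_pos hω]
    gcongr
    exact abs_sin_le_one _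
  have hsinDeriv (t : ℝ) : HasDerivAt (fun s ↦ sin (ω * s) / ω) (cos (ω * t)) t := by
    simpa [mul_div_assoc, hω.ne'] using (((hasDerivAt_id t).const_mul ω).sin).div_const ω
  have hint : IntervalIntegrable (deriv g) volume a b := by
    rw [← Set.uIcc_of_le hab] at hanti
    have hneg := hanti.neg.intervalIntegrable_deriv.neg
    rwa [show -deriv (fun t ↦ -g t) = deriv g by ext; simp] at hneg
  rw [← Set.uIcc_of_le hab] at hdiff
  have hparts : ∫ t in a..b, g t * cos (ω * t) = g b * (sin (ω * b) / ω) -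
      g a * (sin (ω * a) / ω) - ∫ t in a..b, deriv g t * (sin (ω * t) / ω) :=
    intervalIntegral.integral_mul_deriv_eq_deriv_mul (fun t ht ↦ (hdiff t ht).hasDerivAt)
      (fun t _ ↦ hsinDeriv t) hint (Continuous.intervalIntegrable (by fun_prop) _ _)
  have htail := abs_integral_deriv_mul_le_of_antitoneOn hab hanti hsin
  have hga : 0 ≤ g a := hgb.trans (hanti ⟨le_rfl, hab⟩ ⟨hab, le_rfl⟩ hab)
  have hboundary {y t : ℝ} (hy : 0 ≤ y) : |y * (sin (ω * t) / ω)| ≤ y * (1 / ω) := by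
    rw [abs_mul, abs_of_nonneg hy]
    exact mul_le_mul_of_nonneg_left (hsin t) hy
  have ha := hboundary hga (t := a)
  have hb := hboundary hgb (t := b)
  rw [hparts, div_eq_mul_one_div (2 * g a)]
  rw [abs_le] at *
  constructor <;> linarith

lemma abs_integral_potentialIntegrand_le {x : Vtx} {r : ℝ} (h0 : 0 ≤ r) (hpi : r ≤ π) :
    |∫ t in (0 : ℝ)..r, potentialIntegrand x t| ≤ 3 * ‖x‖ * r := by
  have h := intervalIntegral.norm_integral_le_of_norm_le_const (a := 0) (b := r) (C := 3 * ‖x‖)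
    (f := potentialIntegrand x) fun t ht ↦ by
      rw [Set.uIoc_of_le h0] at ht
      rw [norm_of_nonneg (potentialIntegrand_nonneg x t)]
      exact potentialIntegrand_le x ht.1.le (ht.2.trans hpi)
  rwa [sub_zero, abs_of_nonneg h0] at h

lemma continuousOn_inv_sinh_decayRate {r : ℝ} (h0 : 0 < r) :
    ContinuousOn (fun t ↦ 1 / sinh (decayRate t)) (Set.Icc r π) := by
  have := continuous_decayRate
  exact ContinuousOn.div (by fun_prop) (by fun_prop)
    fun t ht ↦ (sinh_decayRate_pos (h0.trans_le ht.1) ht.2).ne'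

lemma abs_integral_inv_sinh_decayRate_sub_log_le {R : ℝ} (hR : 1 ≤ R) :
    |(∫ t in R⁻¹..π, 1 / sinh (decayRate t)) - log R| ≤ 40 := by
  have hr : 0 < R⁻¹ := by positivity
  have hrpi : R⁻¹ ≤ π := (inv_le_one_of_one_le₀ hR).trans (by linarith [pi_gt_three])
  have hinv : IntervalIntegrable (fun t : ℝ ↦ 1 / t) volume R⁻¹ π :=
    intervalIntegral.intervalIntegrable_one_div (fun t ht ↦ by
      rw [Set.uIcc_of_le hrpi] at ht
      exact (hr.trans_le ht.1).ne') continuousOn_id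
  have hsinh : IntervalIntegrable (fun t ↦ 1 / sinh (decayRate t)) volume R⁻¹ π :=
    (continuousOn_inv_sinh_decayRate hr).intervalIntegrable_of_Icc hrpi
  have hlog : ∫ t in R⁻¹..π, 1 / t = log π + log R := by
    rw [integral_one_div_of_pos hr pi_pos, div_inv_eq_mul, log_mul pi_pos.ne' (by positivity)]
  have hdiff := intervalIntegral.norm_integral_le_of_norm_le_const (a := R⁻¹) (b := π) (C := 8)
    (f := fun t ↦ 1 / sinh (decayRate t) - 1 / t) fun t ht ↦ by
      rw [Set.uIoc_of_le hrpi] at ht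
      exact abs_one_div_sinh_decayRate_sub_one_div_le (hr.trans ht.1) ht.2
  rw [intervalIntegral.integral_sub hsinh hinv, hlog, abs_of_nonneg (sub_nonneg.2 hrpi),
    norm_eq_abs, abs_le] at hdiff
  have hlogpi : log π ≤ π - 1 := log_le_sub_one_of_pos pi_pos
  have hlogpi0 : 0 ≤ log π := log_nonneg (by linarith [pi_gt_three])
  rw [abs_le]
  constructor <;> linarith [pi_le_four]

lemma exp_neg_mul_decayRate_div_sinh_le {R t : ℝ} (hR : 1 ≤ R) (h0 : 0 < t) (hpi : t ≤ π) :
    exp (-(decayRate t * R)) / sinh (decayRate t) ≤ 4 / R * t ^ (-2 : ℤ) := by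
  set w := sinh (decayRate t)
  have hw : 0 < w := sinh_decayRate_pos h0 hpi
  have hbernoulli : R * w ≤ exp (decayRate t * R) := by
    have hexp : 1 + w ≤ exp (decayRate t) := by
      rw [← cosh_add_sinh]
      linarith [one_le_cosh (decayRate t)]
    calc R * w ≤ (1 + w) ^ R := by
          linarith [one_add_mul_self_le_rpow_one_add (by linarith : -1 ≤ w) hR]
      _ ≤ exp (decayRate t) ^ R := by gcongr
      _ = exp (decayRate t * R) := (exp_mul _ _).symm
  have hsq : t ^ 2 ≤ 4 * w ^ 2 := by nlinarith [half_le_sinh_decayRate h0.le hpi]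
  rw [exp_neg, zpow_neg, zpow_ofNat, div_eq_mul_inv, ← mul_inv, div_mul_eq_mul_div, mul_comm 4,
    ← div_eq_inv_mul, div_div, ← one_div, div_le_div_iff₀ (by positivity) (by positivity)]
  nlinarith [mul_le_mul_of_nonneg_right hbernoulli hw.le]

lemma antitoneOn_exp_neg_mul_decayRate_div_sinh {r c : ℝ} (h0 : 0 < r) (hc : 0 ≤ c) :
    AntitoneOn (fun t ↦ exp (-(decayRate t * c)) / sinh (decayRate t)) (Set.Icc r π) := by
  intro s hs t ht hst
  have hmono : decayRate s ≤ decayRate t :=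
    decayRate_monotoneOn ⟨h0.le.trans hs.1, hs.2⟩ ⟨h0.le.trans ht.1, ht.2⟩ hst
  have hpos : 0 < sinh (decayRate s) := sinh_decayRate_pos (h0.trans_le hs.1) hs.2
  dsimp only
  gcongr
  exact sinh_le_sinh.2 hmono

lemma abs_integral_decayRate_mul_cos_le_of_fst {x : Vtx} (hx : 1 ≤ ‖x‖) (h : ‖x‖ = |(x.1 : ℝ)|) :
    |∫ t in ‖x‖⁻¹..π, exp (-(decayRate t * |(x.1 : ℝ)|)) / sinh (decayRate t) * cos (x.2 * t)|
      ≤ 4 := by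
  have hr : 0 < ‖x‖⁻¹ := by positivity
  have hrpi : ‖x‖⁻¹ ≤ π := (inv_le_one_of_one_le₀ hx).trans (by linarith [pi_gt_three])
  have hnot : (0 : ℝ) ∉ Set.uIcc ‖x‖⁻¹ π := by
    rw [Set.uIcc_of_le hrpi]
    exact fun h0 ↦ hr.not_ge h0.1
  calc |∫ t in ‖x‖⁻¹..π, exp (-(decayRate t * |(x.1 : ℝ)|)) / sinh (decayRate t) * cos (x.2 * t)|
      ≤ ∫ t in ‖x‖⁻¹..π, 4 / ‖x‖ * t ^ (-2 : ℤ) := by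
        rw [← norm_eq_abs]
        refine intervalIntegral.norm_integral_le_of_norm_le hrpi ?_
          ((intervalIntegral.intervalIntegrable_zpow (Or.inr hnot)).const_mul _)
        refine .of_forall fun t ht ↦ ?_
        have hpos : 0 < sinh (decayRate t) := sinh_decayRate_pos (hr.trans ht.1) ht.2
        rw [norm_mul, norm_of_nonneg (by positivity), ← h]
        exact (mul_le_of_le_one_right (by positivity) (abs_cos_le_one _)).trans
          (exp_neg_mul_decayRate_div_sinh_le hx (hr.trans ht.1) ht.2)
    _ = 4 - 4 / ‖x‖ * π⁻¹ := by
        rw [intervalIntegral.integral_const_mul, integral_zpow (Or.inr ⟨by norm_num, hnot⟩)]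
        norm_num
        field_simp
        ring
    _ ≤ 4 := sub_le_self _ (by positivity)

lemma abs_integral_decayRate_mul_cos_le_of_snd {x : Vtx} (hx : 1 ≤ ‖x‖) (h : ‖x‖ = |(x.2 : ℝ)|) :
    |∫ t in ‖x‖⁻¹..π, exp (-(decayRate t * |(x.1 : ℝ)|)) / sinh (decayRate t) * cos (x.2 * t)|
      ≤ 4 := by
  have hr : 0 < ‖x‖⁻¹ := by positivity
  have hrpi : ‖x‖⁻¹ ≤ π := (inv_le_one_of_one_le₀ hx).trans (by linarith [pi_gt_three])
  have hcos (t : ℝ) : cos (x.2 * t) = cos (‖x‖ * t) := by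
    rw [h, ← cos_abs, abs_mul, ← cos_abs (|(x.2 : ℝ)| * t), abs_mul, abs_abs]
  have hosc := abs_integral_mul_cos_le (by positivity : 0 < ‖x‖) hrpi
    (antitoneOn_exp_neg_mul_decayRate_div_sinh hr (abs_nonneg (x.1 : ℝ)))
    (fun t ht ↦ by
      have hdiff := differentiableAt_decayRate (hr.trans_le ht.1) ht.2
      exact ((hdiff.mul_const _).fun_neg.exp).fun_div hdiff.sinh
        (sinh_decayRate_pos (hr.trans_le ht.1) ht.2).ne')
    (div_nonneg (exp_pos _).le (sinh_decayRate_nonneg _))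
  simp only [hcos]
  refine hosc.trans ?_
  have hamp : exp (-(decayRate ‖x‖⁻¹ * |(x.1 : ℝ)|)) / sinh (decayRate ‖x‖⁻¹) ≤ 2 * ‖x‖ := by
    calc exp (-(decayRate ‖x‖⁻¹ * |(x.1 : ℝ)|)) / sinh (decayRate ‖x‖⁻¹) ≤ 1 / (‖x‖⁻¹ / 2) := by
          gcongr
          · exact exp_le_one_iff.2 (neg_nonpos.2 (mul_nonneg (decayRate_nonneg _) (abs_nonneg _)))
          · exact half_le_sinh_decayRate hr.le hrpi
      _ = 2 * ‖x‖ := by field_simp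
  rw [div_le_iff₀ (by positivity)]
  linarith

lemma one_le_norm_of_ne_zero {x : Vtx} (hx : x ≠ 0) : 1 ≤ ‖x‖ := by
  have hcoord {k : ℤ} (hk : k ≠ 0) : 1 ≤ ‖k‖ := by
    rw [Int.norm_eq_abs]
    exact_mod_cast Int.one_le_abs hk
  rcases not_and_or.1 (mt Prod.ext_iff.2 hx) with h | h
  · exact (hcoord h).trans (norm_fst_le x)
  · exact (hcoord h).trans (norm_snd_le x)

lemma abs_potentialKernel_sub_posLog_norm_le (x : Vtx) :
    |potentialKernel x - log⁺ ‖x‖| ≤ 47 := by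
  rcases eq_or_ne x 0 with rfl | hx0
  · simp [potentialKernel_zero]
  have hx : 1 ≤ ‖x‖ := one_le_norm_of_ne_zero hx0
  have hr : 0 < ‖x‖⁻¹ := by positivity
  have hrpi : ‖x‖⁻¹ ≤ π := (inv_le_one_of_one_le₀ hx).trans (by linarith [pi_gt_three])
  have hosc :
      |∫ t in ‖x‖⁻¹..π, exp (-(decayRate t * |(x.1 : ℝ)|)) / sinh (decayRate t) * cos (x.2 * t)|
        ≤ 4 := by
    rcases max_choice ‖x.1‖ ‖x.2‖ with h | h
    · exact abs_integral_decayRate_mul_cos_le_of_fst hx h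
    · exact abs_integral_decayRate_mul_cos_le_of_snd hx h
  have hsmall := abs_integral_potentialIntegrand_le (x := x) hr.le hrpi
  have hlarge := abs_integral_inv_sinh_decayRate_sub_log_le hx
  have hsplit : potentialKernel x = (∫ t in (0 : ℝ)..‖x‖⁻¹, potentialIntegrand x t) +
      ((∫ t in ‖x‖⁻¹..π, 1 / sinh (decayRate t)) - ∫ t in ‖x‖⁻¹..π,
        exp (-(decayRate t * |(x.1 : ℝ)|)) / sinh (decayRate t) * cos (x.2 * t)) := by
    rw [potentialKernel, ← intervalIntegral.integral_add_adjacent_intervals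
      (intervalIntegrable_potentialIntegrand x le_rfl hr.le hrpi)
      (intervalIntegrable_potentialIntegrand x hr.le hrpi le_rfl),
      ← intervalIntegral.integral_sub]
    · congr 2
      ext t
      rw [potentialIntegrand]
      ring
    · exact (continuousOn_inv_sinh_decayRate hr).intervalIntegrable_of_Icc hrpi
    · have hcont := continuous_decayRate
      exact ContinuousOn.intervalIntegrable_of_Icc hrpi <| ContinuousOn.mul
        (ContinuousOn.div (by fun_prop) (by fun_prop)
          fun t ht ↦ (sinh_decayRate_pos (hr.trans_le ht.1) ht.2).ne') (by fun_prop)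
  rw [mul_assoc, mul_inv_cancel₀ (by positivity), mul_one] at hsmall
  rw [hsplit, posLog_eq_log (by rwa [abs_of_pos (by positivity)])]
  rw [abs_le] at *
  constructor <;> linarith

end PotentialKernel

/-! ### Discrete potential theory -/

noncomputable section DiscretePotentialTheory

open Real

/-- The discrete Laplacian `(2/π)·(1 − nbrAvg)`, whose normalisation makes its inverse the Green
function with the factor `π/2`. -/
def lap : (Vtx → ℝ) →ₗ[ℝ] Vtx → ℝ := (2 / π) • (LinearMap.id - nbrAvg)

lemma lap_apply (f : Vtx → ℝ) (x : Vtx) : lap f x = 2 / π * (f x - nbrAvg f x) := rfl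

lemma lap_eq_iff {f : Vtx → ℝ} {x : Vtx} {c : ℝ} :
    lap f x = c ↔ f x = nbrAvg f x + π / 2 * c := by
  rw [lap_apply]
  have := pi_pos
  constructor <;> intro h
  · rw [← h]
    field_simp
    ring
  · rw [h]
    field_simp
    ring

lemma lap_nonpos_iff {f : Vtx → ℝ} {x : Vtx} : lap f x ≤ 0 ↔ f x ≤ nbrAvg f x := by
  rw [lap_apply, ← mul_zero (2 / π), mul_le_mul_iff_right₀ (by positivity), sub_nonpos]

lemma le_of_lap_nonpos {D : Finset Vtx} {f : Vtx → ℝ} {M : ℝ} (hsub : ∀ x ∈ D, lap f x ≤ 0)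
    (hbd : ∀ x ∈ D, ∀ e ∈ unitSteps, x + e ∉ D → f (x + e) ≤ M) {x : Vtx} (hx : x ∈ D) :
    f x ≤ M := by
  by_contra! hM
  -- Among the maximisers of `f` on `D`, the rightmost one has its right neighbour in `D`.
  obtain ⟨m, hm, hmax⟩ := D.exists_max_image (fun x ↦ toLex (f x, x.1)) ⟨x, hx⟩
  simp only [Prod.Lex.toLex_le_toLex] at hmax
  have hle (y : Vtx) (hy : y ∈ D) : f y ≤ f m := (hmax y hy).elim le_of_lt fun h ↦ h.1.le
  have hMm : M < f m := hM.trans_le (hle x hx)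
  have hnbr (e : Vtx) (he : e ∈ unitSteps) : f (m + e) ≤ f m := by
    by_cases hD : m + e ∈ D
    exacts [hle _ hD, (hbd m hm e he hD).trans hMm.le]
  have havg := lap_nonpos_iff.1 (hsub m hm)
  rw [nbrAvg_apply, sum_unitSteps] at havg
  have hright : f (m + (1, 0)) = f m := by
    linarith [hnbr (1, 0) (by simp [unitSteps]), hnbr (-1, 0) (by simp [unitSteps]),
      hnbr (0, 1) (by simp [unitSteps]), hnbr (0, -1) (by simp [unitSteps])]
  have hmem : m + (1, 0) ∈ D := by
    by_contra hD
    linarith [hbd m hm (1, 0) (by simp [unitSteps]) hD]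
  rcases hmax _ hmem with h | h
  · exact h.ne hright
  · simp at h

lemma eq_zero_of_lap_eq_zero {D : Finset Vtx} {f : Vtx → ℝ} (h0 : ∀ x ∉ D, f x = 0)
    (hlap : ∀ x ∈ D, lap f x = 0) : f = 0 := by
  ext x
  by_cases hx : x ∈ D
  · refine le_antisymm (le_of_lap_nonpos (fun x hx ↦ (hlap x hx).le)
      (fun x _ e _ hD ↦ (h0 _ hD).le) hx) (neg_nonpos.1 ?_)
    exact le_of_lap_nonpos (f := -f) (fun x hx ↦ by simp [hlap x hx])
      (fun x _ e _ hD ↦ by simp [h0 _ hD]) hx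
  · exact h0 x hx

lemma exists_lap_eq (D : Finset Vtx) (h : Vtx → ℝ) :
    ∃ g : Vtx → ℝ, (∀ x ∉ D, g x = 0) ∧ ∀ x ∈ D, lap g x = h x := by
  let extend : (D → ℝ) →ₗ[ℝ] Vtx → ℝ := Function.ExtendByZero.linearMap ℝ Subtype.val
  let T : (D → ℝ) →ₗ[ℝ] D → ℝ := LinearMap.funLeft ℝ ℝ Subtype.val ∘ₗ lap ∘ₗ extend
  have hext (f : D → ℝ) (x : D) : extend f x = f x := Subtype.val_injective.extend_apply f 0 x
  have hoff (f : D → ℝ) (x : Vtx) (hx : x ∉ D) : extend f x = 0 :=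
    Function.extend_apply' _ _ _ fun ⟨y, hy⟩ ↦ hx (hy ▸ y.2)
  have hinj : Function.Injective T := by
    refine (injective_iff_map_eq_zero T).2 fun f hf ↦ ?_
    have := eq_zero_of_lap_eq_zero (hoff f) fun x hx ↦ congrFun hf ⟨x, hx⟩
    ext x
    rw [← hext f x, this, Pi.zero_apply, Pi.zero_apply]
  obtain ⟨f, hf⟩ := LinearMap.injective_iff_surjective.1 hinj fun x ↦ h x
  exact ⟨extend f, hoff f, fun x hx ↦ congrFun hf ⟨x, hx⟩⟩

/-- The Green function `x ↦ (π/2)·E_x[#visits to v before leaving D]` of the walk killed outside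
`D`, encoded as the solution `g` of `lap g = 1_{v}` on `D` with `g = 0` off `D`. -/
def killedGreen (D : Finset Vtx) (v : Vtx) : Vtx → ℝ :=
  (exists_lap_eq D (Pi.single v 1)).choose

variable {D V : Finset Vtx} {v x : Vtx} {S : ℝ}

lemma killedGreen_of_notMem (hx : x ∉ D) : killedGreen D v x = 0 :=
  (exists_lap_eq D (Pi.single v 1)).choose_spec.1 x hx

lemma lap_killedGreen_of_mem (hx : x ∈ D) : lap (killedGreen D v) x = (Pi.single v 1 : Vtx → ℝ) x :=
  (exists_lap_eq D (Pi.single v 1)).choose_spec.2 x hx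

lemma eq_killedGreen {g : Vtx → ℝ} (h0 : ∀ x ∉ D, g x = 0)
    (hlap : ∀ x ∈ D, lap g x = (Pi.single v 1 : Vtx → ℝ) x) : g = killedGreen D v := by
  refine sub_eq_zero.1 (eq_zero_of_lap_eq_zero (D := D) (fun x hx ↦ ?_) fun x hx ↦ ?_)
  · rw [Pi.sub_apply, h0 x hx, killedGreen_of_notMem hx, sub_zero]
  · rw [map_sub, Pi.sub_apply, hlap x hx, lap_killedGreen_of_mem hx, sub_self]

lemma killedGreen_eq_zero (hv : v ∉ D) : killedGreen D v = 0 := by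
  refine (eq_killedGreen (g := 0) (fun _ _ ↦ rfl) fun x hx ↦ ?_).symm
  rw [map_zero, Pi.single_eq_of_ne (ne_of_mem_of_not_mem hx hv), Pi.zero_apply]

lemma single_one_nonneg (v x : Vtx) : 0 ≤ (Pi.single v 1 : Vtx → ℝ) x :=
  (Pi.single_nonneg.2 zero_le_one : (0 : Vtx → ℝ) ≤ Pi.single v 1) x

lemma killedGreen_nonneg (D : Finset Vtx) (v x : Vtx) : 0 ≤ killedGreen D v x := by
  by_cases hx : x ∈ D
  · refine neg_nonpos.1 (le_of_lap_nonpos (f := -killedGreen D v) (fun x hx ↦ ?_)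
      (fun x _ e _ hD ↦ by simp [killedGreen_of_notMem hD]) hx)
    rw [map_neg, Pi.neg_apply, lap_killedGreen_of_mem hx]
    exact neg_nonpos.2 (single_one_nonneg v x)
  · exact (killedGreen_of_notMem hx).ge

lemma killedGreen_mono (hDV : D ⊆ V) (v x : Vtx) : killedGreen D v x ≤ killedGreen V v x := by
  by_cases hx : x ∈ D
  · refine sub_nonpos.1 (le_of_lap_nonpos (f := killedGreen D v - killedGreen V v)
      (fun x hx ↦ ?_) (fun x _ e _ hD ↦ ?_) hx)
    · rw [map_sub, Pi.sub_apply, lap_killedGreen_of_mem hx, lap_killedGreen_of_mem (hDV hx),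
        sub_self]
    · simp [killedGreen_of_notMem hD, killedGreen_nonneg]
  · exact (killedGreen_of_notMem hx).trans_le (killedGreen_nonneg V v x)

lemma lap_potentialKernel_sub (v x : Vtx) :
    lap (fun y ↦ potentialKernel (y - v)) x = -(Pi.single v 1 : Vtx → ℝ) x := by
  have hshift : nbrAvg (fun y ↦ potentialKernel (y - v)) x = nbrAvg potentialKernel (x - v) := by
    simp only [nbrAvg_apply, add_sub_right_comm]
  rw [lap_eq_iff, hshift, nbrAvg_potentialKernel, Pi.single_apply]
  simp only [sub_eq_zero]
  ring

lemma lap_killedGreen_add_potentialKernel (hx : x ∈ D) :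
    lap (killedGreen D v + fun y ↦ potentialKernel (y - v)) x = 0 := by
  rw [map_add, Pi.add_apply, lap_killedGreen_of_mem hx, lap_potentialKernel_sub, add_neg_cancel]

lemma killedGreen_le_of_posLog_le
    (hS : ∀ x ∈ D, ∀ e ∈ unitSteps, x + e ∉ D → log⁺ ‖x + e - v‖ ≤ S) (z : Vtx) :
    killedGreen D v z ≤ max 0 (S - log⁺ ‖z - v‖) + 94 := by
  by_cases hz : z ∈ D
  · have hmax : killedGreen D v z + potentialKernel (z - v) ≤ S + 47 := by
      refine le_of_lap_nonpos (f := killedGreen D v + fun y ↦ potentialKernel (y - v))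
        (fun x hx ↦ (lap_killedGreen_add_potentialKernel hx).le) (fun x hx e he hD ↦ ?_) hz
      rw [Pi.add_apply, killedGreen_of_notMem hD, zero_add]
      linarith [hS x hx e he hD, (abs_le.1 (abs_potentialKernel_sub_posLog_norm_le (x + e - v))).2]
    linarith [(abs_le.1 (abs_potentialKernel_sub_posLog_norm_le (z - v))).1,
      le_max_right 0 (S - log⁺ ‖z - v‖)]
  · rw [killedGreen_of_notMem hz]
    positivity

lemma le_killedGreen_of_le_posLog (hS : ∀ w ∉ D, S ≤ log⁺ ‖w - v‖) (z : Vtx) :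
    S - log⁺ ‖z - v‖ - 94 ≤ killedGreen D v z := by
  by_cases hz : z ∈ D
  · have hmax : -(killedGreen D v z + potentialKernel (z - v)) ≤ -S + 47 := by
      refine le_of_lap_nonpos (f := -(killedGreen D v + fun y ↦ potentialKernel (y - v)))
        (fun x hx ↦ ?_) (fun x _ e _ hD ↦ ?_) hz
      · rw [map_neg, Pi.neg_apply, lap_killedGreen_add_potentialKernel hx, neg_zero]
      · rw [Pi.neg_apply, Pi.add_apply, killedGreen_of_notMem hD, zero_add]
        linarith [hS _ hD, (abs_le.1 (abs_potentialKernel_sub_posLog_norm_le (x + e - v))).1]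
    linarith [(abs_le.1 (abs_potentialKernel_sub_posLog_norm_le (z - v))).2]
  · rw [killedGreen_of_notMem hz]
    linarith [hS z hz]

lemma lap_killedGreen_of_notMem_nonpos (hx : x ∉ D) : lap (killedGreen D v) x ≤ 0 := by
  rw [lap_nonpos_iff, killedGreen_of_notMem hx, nbrAvg_apply]
  exact div_nonneg (Finset.sum_nonneg fun e _ ↦ killedGreen_nonneg D v _) (by norm_num)

lemma lap_killedGreen_of_forall_notMem (hx : x ∉ D) (hn : ∀ e ∈ unitSteps, x + e ∉ D) :
    lap (killedGreen D v) x = 0 := by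
  rw [lap_apply, killedGreen_of_notMem hx, nbrAvg_apply,
    Finset.sum_eq_zero fun e he ↦ killedGreen_of_notMem (hn e he), zero_div, sub_zero, mul_zero]

end DiscretePotentialTheory

noncomputable section EnergyForm

open Real

lemma mem_intr {B : Finset Vtx} {x : Vtx} : x ∈ intr B ↔ x ∈ B ∧ ∀ e ∈ unitSteps, x + e ∈ B := by
  obtain ⟨a, b⟩ := x
  simp only [intr, bdry, Finset.mem_sdiff, Finset.mem_filter, unitSteps, Finset.mem_insert,
    Finset.mem_singleton, forall_eq_or_imp, forall_eq, Prod.mk_add_mk, add_zero, ← sub_eq_add_neg]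
  tauto

lemma intr_subset (B : Finset Vtx) : intr B ⊆ B := Finset.sdiff_subset

lemma intr_mono {B B' : Finset Vtx} (h : B ⊆ B') : intr B ⊆ intr B' := fun _ hx ↦
  mem_intr.2 ⟨h (mem_intr.1 hx).1, fun e he ↦ h ((mem_intr.1 hx).2 e he)⟩

lemma notMem_of_add_notMem_intr {B : Finset Vtx} {x e : Vtx} (he : e ∈ unitSteps)
    (hx : x ∉ B) : x + e ∉ intr B := fun h ↦
  hx (by simpa using (mem_intr.1 h).2 (-e) (neg_mem_unitSteps he))

/-- The Dirichlet energy `(f, g) ↦ Σ_{x∈V} f(x)·(lap g)(x)`. -/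
def energyForm (V : Finset Vtx) : (Vtx → ℝ) →ₗ[ℝ] (Vtx → ℝ) →ₗ[ℝ] ℝ :=
  LinearMap.mk₂ ℝ (fun f g ↦ ∑ x ∈ V, f x * lap g x)
    (fun f f' g ↦ by simp only [Pi.add_apply, add_mul, Finset.sum_add_distrib])
    (fun c f g ↦ by simp only [Pi.smul_apply, smul_eq_mul, mul_assoc, Finset.mul_sum])
    (fun f g g' ↦ by simp only [map_add, Pi.add_apply, mul_add, Finset.sum_add_distrib])
    (fun c f g ↦ by
      simp only [map_smul, Pi.smul_apply, smul_eq_mul, mul_left_comm _ c, Finset.mul_sum])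

variable {D V : Finset Vtx} {v : Vtx} {S : ℝ} {f g : Vtx → ℝ}

lemma energyForm_apply (V : Finset Vtx) (f g : Vtx → ℝ) :
    energyForm V f g = ∑ x ∈ V, f x * lap g x := rfl

lemma energyForm_eq (V : Finset Vtx) (f g : Vtx → ℝ) :
    energyForm V f g = 2 / π * (∑ x ∈ V, f x * g x - ∑ x ∈ V, f x * nbrAvg g x) := by
  simp only [energyForm_apply, lap_apply, ← Finset.sum_sub_distrib, Finset.mul_sum]
  exact Finset.sum_congr rfl fun x _ ↦ by ring

lemma sum_comp_add_right {F : Vtx → ℝ} {e : Vtx} (hF : ∀ x ∉ V, F x = 0)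
    (hFe : ∀ x ∉ V, F (x + e) = 0) : ∑ x ∈ V, F (x + e) = ∑ x ∈ V, F x := by
  rw [← tsum_eq_sum (L := .unconditional Vtx) hF, ← tsum_eq_sum (L := .unconditional Vtx) hFe]
  exact (Equiv.addRight e).tsum_eq F

lemma sum_nbrAvg (hf : ∀ x ∉ intr V, f x = 0) : ∑ x ∈ V, nbrAvg f x = ∑ x ∈ V, f x := by
  have hshift (e : Vtx) (he : e ∈ unitSteps) : ∑ x ∈ V, f (x + e) = ∑ x ∈ V, f x :=
    sum_comp_add_right (fun x hx ↦ hf x fun h ↦ hx (intr_subset V h))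
      fun x hx ↦ hf _ (notMem_of_add_notMem_intr he hx)
  simp only [nbrAvg_apply]
  rw [← Finset.sum_div, Finset.sum_comm, Finset.sum_congr rfl hshift, sum_unitSteps]
  ring

lemma sum_lap (hf : ∀ x ∉ intr V, f x = 0) : ∑ x ∈ V, lap f x = 0 := by
  simp only [lap_apply]
  rw [← Finset.mul_sum, Finset.sum_sub_distrib, sum_nbrAvg hf, sub_self, mul_zero]

lemma sum_mul_nbrAvg_comm (hf : ∀ x ∉ V, f x = 0) (hg : ∀ x ∉ V, g x = 0) :
    ∑ x ∈ V, f x * nbrAvg g x = ∑ x ∈ V, g x * nbrAvg f x := by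
  have hshift (e : Vtx) : ∑ x ∈ V, f x * g (x + e) = ∑ x ∈ V, g x * f (x + -e) := by
    rw [← sum_comp_add_right (F := fun x ↦ g x * f (x + -e)) (e := e)
      (fun x hx ↦ by rw [hg x hx, zero_mul])
      fun x hx ↦ by rw [add_neg_cancel_right, hf x hx, mul_zero]]
    exact Finset.sum_congr rfl fun x _ ↦ by rw [add_neg_cancel_right, mul_comm]
  simp only [nbrAvg_apply, mul_div_assoc', Finset.mul_sum, ← Finset.sum_div]
  rw [Finset.sum_comm, Finset.sum_comm (s := V), Finset.sum_congr rfl fun e _ ↦ hshift e]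
  congr 1
  exact Finset.sum_equiv (Equiv.neg Vtx)
    (fun e ↦ ⟨neg_mem_unitSteps, fun h ↦ neg_neg e ▸ neg_mem_unitSteps h⟩) fun e _ ↦ rfl

lemma energyForm_comm (hf : ∀ x ∉ V, f x = 0) (hg : ∀ x ∉ V, g x = 0) :
    energyForm V f g = energyForm V g f := by
  rw [energyForm_eq, energyForm_eq, sum_mul_nbrAvg_comm hf hg]
  simp only [mul_comm (f _)]

lemma energyForm_self_nonneg (hf : ∀ x ∉ intr V, f x = 0) : 0 ≤ energyForm V f f := by
  have hyoung (x : Vtx) : f x * nbrAvg f x ≤ (f x ^ 2 + nbrAvg (fun y ↦ f y ^ 2) x) / 2 := by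
    rw [nbrAvg_apply, nbrAvg_apply, sum_unitSteps, sum_unitSteps]
    linarith [two_mul_le_add_sq (f x) (f (x + (1, 0))), two_mul_le_add_sq (f x) (f (x + (-1, 0))),
      two_mul_le_add_sq (f x) (f (x + (0, 1))), two_mul_le_add_sq (f x) (f (x + (0, -1)))]
  have hsum : ∑ x ∈ V, f x * nbrAvg f x ≤ ∑ x ∈ V, f x * f x :=
    calc ∑ x ∈ V, f x * nbrAvg f x
        ≤ ∑ x ∈ V, (f x ^ 2 + nbrAvg (fun y ↦ f y ^ 2) x) / 2 :=
          Finset.sum_le_sum fun x _ ↦ hyoung x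
      _ = ∑ x ∈ V, f x * f x := by
          rw [← Finset.sum_div, Finset.sum_add_distrib,
            sum_nbrAvg fun x hx ↦ by rw [hf x hx, zero_pow two_ne_zero], add_self_div_two]
          simp only [pow_two]
  rw [energyForm_eq]
  exact mul_nonneg (by positivity) (sub_nonneg.2 hsum)

lemma neg_half_add_le_energyForm (hf : ∀ x ∉ intr V, f x = 0) (hg : ∀ x ∉ intr V, g x = 0) :
    -((energyForm V f f + energyForm V g g) / 2) ≤ energyForm V f g := by
  have hcomm : energyForm V g f = energyForm V f g :=
    energyForm_comm (fun x hx ↦ hg x fun hi ↦ hx (intr_subset V hi))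
      fun x hx ↦ hf x fun hi ↦ hx (intr_subset V hi)
  have hnonneg : 0 ≤ energyForm V (f + g) (f + g) :=
    energyForm_self_nonneg fun x hx ↦ by rw [Pi.add_apply, hf x hx, hg x hx, add_zero]
  simp only [map_add, LinearMap.add_apply, hcomm] at hnonneg
  linarith

lemma energyForm_killedGreen (hDV : D ⊆ V) (hf : ∀ x ∉ D, f x = 0) (v : Vtx) :
    energyForm V f (killedGreen D v) = f v := by
  by_cases hv : v ∈ D
  · rw [energyForm_apply, Finset.sum_eq_single_of_mem v (hDV hv), lap_killedGreen_of_mem hv,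
      Pi.single_eq_same, mul_one]
    intro x _ hxv
    by_cases hx : x ∈ D
    · rw [lap_killedGreen_of_mem hx, Pi.single_eq_of_ne hxv, mul_zero]
    · rw [hf x hx, zero_mul]
  · rw [killedGreen_eq_zero hv, map_zero, hf v hv]

lemma energyForm_killedGreen_le (hDV : D ⊆ V) (hf : ∀ x, 0 ≤ f x) (v : Vtx) :
    energyForm V f (killedGreen D v) ≤ f v := by
  by_cases hv : v ∈ D
  · rw [energyForm_apply, ← Finset.sum_erase_add V _ (hDV hv), lap_killedGreen_of_mem hv,
      Pi.single_eq_same, mul_one, add_le_iff_nonpos_left]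
    refine Finset.sum_nonpos fun x hx ↦ ?_
    by_cases hxD : x ∈ D
    · rw [lap_killedGreen_of_mem hxD, Pi.single_eq_of_ne (Finset.ne_of_mem_erase hx), mul_zero]
    · exact mul_nonpos_of_nonneg_of_nonpos (hf x) (lap_killedGreen_of_notMem_nonpos hxD)
  · rw [killedGreen_eq_zero hv, map_zero]
    exact hf v

-- Off `v`, `lap (killedGreen D v)` is minus the exit distribution from `D`, of total mass `1`.
lemma sub_le_energyForm_killedGreen (hDV : D ⊆ intr V) (hv : f v ≤ S ∨ v ∈ D)
    (hS : ∀ x ∉ D, ∀ e ∈ unitSteps, x + e ∈ D → f x ≤ S) :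
    f v - S ≤ energyForm V f (killedGreen D v) := by
  by_cases hvD : v ∈ D
  · have hcenter : energyForm V f (killedGreen D v) =
        ∑ x ∈ V, (f x - S) * lap (killedGreen D v) x := by
      have hmass := sum_lap fun x hx ↦ killedGreen_of_notMem (D := D) (v := v) fun h ↦ hx (hDV h)
      simp only [energyForm_apply, sub_mul, Finset.sum_sub_distrib, ← Finset.mul_sum, hmass,
        mul_zero, sub_zero]
    rw [hcenter, ← Finset.sum_erase_add V _ (intr_subset V (hDV hvD)), lap_killedGreen_of_mem hvD,
      Pi.single_eq_same, mul_one, le_add_iff_nonneg_left]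
    refine Finset.sum_nonneg fun x hx ↦ ?_
    by_cases hxD : x ∈ D
    · rw [lap_killedGreen_of_mem hxD, Pi.single_eq_of_ne (Finset.ne_of_mem_erase hx), mul_zero]
    by_cases hn : ∃ e ∈ unitSteps, x + e ∈ D
    · obtain ⟨e, he, hxe⟩ := hn
      exact mul_nonneg_of_nonpos_of_nonpos (sub_nonpos.2 (hS x hxD e he hxe))
        (lap_killedGreen_of_notMem_nonpos hxD)
    · push Not at hn
      rw [lap_killedGreen_of_forall_notMem hxD hn, mul_zero]
  · rw [killedGreen_eq_zero hvD, map_zero]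
    exact sub_nonpos.2 (hv.resolve_right hvD)

end EnergyForm

/-! ### Energies of Green functions of logarithmic balls -/

noncomputable section LogBall

open Real

lemma posLog_norm_add_le_one_add_max {E : Type*} [SeminormedAddCommGroup E] (x y : E) :
    log⁺ ‖x + y‖ ≤ 1 + max (log⁺ ‖x‖) (log⁺ ‖y‖) := by
  have hmax : ‖x + y‖ ≤ 2 * max ‖x‖ ‖y‖ := by
    linarith [norm_add_le x y, le_max_left ‖x‖ ‖y‖, le_max_right ‖x‖ ‖y‖]
  calc log⁺ ‖x + y‖
      ≤ log⁺ (2 * max ‖x‖ ‖y‖) := posLog_le_posLog (norm_nonneg _) hmax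
    _ ≤ log⁺ 2 + log⁺ (max ‖x‖ ‖y‖) := posLog_mul
    _ ≤ 1 + max (log⁺ ‖x‖) (log⁺ ‖y‖) := by
        rw [posLog_eq_log (by norm_num), monotoneOn_posLog.map_max (norm_nonneg x) (norm_nonneg y)]
        linarith [log_two_lt_d9]

lemma posLog_norm_sub_le_one_add_max {E : Type*} [SeminormedAddCommGroup E] (x y z : E) :
    log⁺ ‖x - z‖ ≤ 1 + max (log⁺ ‖x - y‖) (log⁺ ‖y - z‖) := by
  simpa only [sub_add_sub_cancel] using posLog_norm_add_le_one_add_max (x - y) (y - z)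

lemma norm_le_one_of_mem_unitSteps {e : Vtx} (he : e ∈ unitSteps) : ‖e‖ ≤ 1 := by
  simp only [unitSteps, Finset.mem_insert, Finset.mem_singleton] at he
  rcases he with rfl | rfl | rfl | rfl <;> simp [Prod.norm_def]

lemma posLog_norm_sub_le_of_unitStep {e : Vtx} (he : e ∈ unitSteps) (x v : Vtx) :
    log⁺ ‖x - v‖ ≤ 1 + log⁺ ‖x + e - v‖ := by
  have hstep : log⁺ ‖x - (x + e)‖ = 0 := by
    rw [posLog_eq_zero_iff, abs_norm, sub_add_cancel_left, norm_neg]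
    exact norm_le_one_of_mem_unitSteps he
  simpa only [hstep, max_eq_right posLog_nonneg] using posLog_norm_sub_le_one_add_max x (x + e) v

/-- `D` is, up to bounded factors, the intersection with `V` of the ball of radius `e^R` around
`v`, and it contains the ball of radius `e^{R-δ}`. -/
structure IsLogBall (V D : Finset Vtx) (v : Vtx) (R δ : ℝ) : Prop where
  subset : D ⊆ intr V
  radius_nonneg : 0 ≤ R
  defect_nonneg : 0 ≤ δ
  outer : ∀ x ∈ D, ∀ e ∈ unitSteps, log⁺ ‖x + e - v‖ ≤ R
  inner : ∀ w ∈ intr V, w ∉ D → R - 2 ≤ log⁺ ‖w - v‖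
  inner_defect : ∀ w ∉ D, R - δ ≤ log⁺ ‖w - v‖

/-- The part of `D` at distance less than `e^{L-2}` from `v`. -/
def logCore (D : Finset Vtx) (v : Vtx) (L : ℝ) : Finset Vtx :=
  D.filter fun x ↦ log⁺ ‖x - v‖ < L - 2

variable {V D D' : Finset Vtx} {v v' : Vtx} {R R' δ L : ℝ}

lemma logCore_subset : logCore D v L ⊆ D := Finset.filter_subset _ _

lemma posLog_norm_sub_le_of_add_mem_logCore {x e : Vtx} (he : e ∈ unitSteps)
    (hx : x + e ∈ logCore D v (log⁺ ‖v - v'‖)) : log⁺ ‖v - v'‖ - 1 ≤ log⁺ ‖x - v'‖ := by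
  have hcore := (Finset.mem_filter.1 hx).2
  have hstep := posLog_norm_sub_le_of_unitStep he x v
  have htri := posLog_norm_sub_le_one_add_max v x v'
  rw [norm_sub_rev v x] at htri
  rcases le_max_iff.1 (sub_le_iff_le_add'.2 htri) with h | h <;> linarith

namespace IsLogBall

lemma killedGreen_le (h : IsLogBall V D v R δ) (z : Vtx) :
    killedGreen D v z ≤ max 0 (R - log⁺ ‖z - v‖) + 94 :=
  killedGreen_le_of_posLog_le (fun x hx e he _ ↦ h.outer x hx e he) z

lemma killedGreen_eq_zero_off (h : IsLogBall V D v R δ) (x : Vtx) (hx : x ∉ intr V) :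
    killedGreen D v x = 0 :=
  killedGreen_of_notMem fun hD ↦ hx (h.subset hD)

lemma energyForm_killedGreen_comm (h : IsLogBall V D v R δ) (h' : IsLogBall V D' v' R' δ) :
    energyForm V (killedGreen D v) (killedGreen D' v') =
      energyForm V (killedGreen D' v') (killedGreen D v) :=
  energyForm_comm (fun x hx ↦ h.killedGreen_eq_zero_off x fun hi ↦ hx (intr_subset V hi))
    fun x hx ↦ h'.killedGreen_eq_zero_off x fun hi ↦ hx (intr_subset V hi)

lemma energyForm_killedGreen_le_max (h : IsLogBall V D v R δ) (h' : IsLogBall V D' v' R' δ) :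
    energyForm V (killedGreen D v) (killedGreen D' v') ≤ max 0 (R' - log⁺ ‖v - v'‖) + 94 := by
  rw [h.energyForm_killedGreen_comm h']
  exact (energyForm_killedGreen_le (h.subset.trans (intr_subset V)) (killedGreen_nonneg D' v')
    v).trans (h'.killedGreen_le v)

lemma le_energyForm_of_near (h : IsLogBall V D v R δ) (h' : IsLogBall V D' v' R' δ) (hR : R' ≤ R)
    (hnear : log⁺ ‖v - v'‖ ≤ R - 4) :
    max 0 (R' - log⁺ ‖v - v'‖) - δ - 191 ≤ energyForm V (killedGreen D v) (killedGreen D' v') := by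
  have hbd (x : Vtx) (hx : x ∉ D) : killedGreen D' v' x ≤ 97 := by
    by_cases hx' : x ∈ D'
    · have htri := posLog_norm_sub_le_one_add_max x v' v
      rw [norm_sub_rev v' v] at htri
      have hinner := h.inner x (h'.subset hx') hx
      have hfar : R - 3 ≤ log⁺ ‖x - v'‖ := by
        rcases le_max_iff.1 (sub_le_iff_le_add'.2 htri) with h | h <;> linarith
      have hmax : max 0 (R' - log⁺ ‖x - v'‖) ≤ 3 := max_le (by norm_num) (by linarith)
      linarith [h'.killedGreen_le x]
    · rw [killedGreen_of_notMem hx']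
      norm_num
  have hpole : max 0 (R' - log⁺ ‖v - v'‖) - δ - 94 ≤ killedGreen D' v' v := by
    have hlower := le_killedGreen_of_le_posLog h'.inner_defect v
    have hnonneg := killedGreen_nonneg D' v' v
    rcases max_cases 0 (R' - log⁺ ‖v - v'‖) with hm | hm <;> linarith [h.defect_nonneg]
  have hexit := sub_le_energyForm_killedGreen h.subset ((em (v ∈ D)).symm.imp_left (hbd v))
    fun x hx _ _ _ ↦ hbd x hx
  rw [h.energyForm_killedGreen_comm h']
  linarith

lemma energyForm_sub_logCore_self_le (h : IsLogBall V D v R δ) (hL : R - 4 ≤ L) :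
    energyForm V (killedGreen D v - killedGreen (logCore D v L) v)
      (killedGreen D v - killedGreen (logCore D v L) v) ≤ δ + 194 := by
  have hDV := h.subset.trans (intr_subset V)
  have hcoreD (x : Vtx) (hx : x ∉ D) : killedGreen (logCore D v L) v x = 0 :=
    killedGreen_of_notMem fun hc ↦ hx (logCore_subset hc)
  have hcomm := energyForm_comm (f := killedGreen D v) (g := killedGreen (logCore D v L) v)
    (fun x hx ↦ killedGreen_of_notMem fun hD ↦ hx (hDV hD)) fun x hx ↦ hcoreD x fun hD ↦ hx (hDV hD)
  have hreproduce : energyForm V (killedGreen D v - killedGreen (logCore D v L) v)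
      (killedGreen D v - killedGreen (logCore D v L) v) =
        killedGreen D v v - killedGreen (logCore D v L) v v := by
    simp only [map_sub, LinearMap.sub_apply]
    rw [hcomm, energyForm_killedGreen hDV (fun _ ↦ killedGreen_of_notMem),
      energyForm_killedGreen hDV hcoreD, energyForm_killedGreen (logCore_subset.trans hDV)
        fun _ ↦ killedGreen_of_notMem]
    ring
  have hinner (w : Vtx) (hw : w ∉ logCore D v L) : R - δ - 6 ≤ log⁺ ‖w - v‖ := by
    by_cases hwD : w ∈ D
    · have : L - 2 ≤ log⁺ ‖w - v‖ := by
        by_contra! hlt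
        exact hw (Finset.mem_filter.2 ⟨hwD, hlt⟩)
      linarith [h.defect_nonneg]
    · linarith [h.inner_defect w hwD]
  have hupper := h.killedGreen_le v
  have hlower := le_killedGreen_of_le_posLog hinner v
  rw [sub_self, norm_zero, posLog_zero, sub_zero] at hupper hlower
  rw [hreproduce]
  linarith [max_eq_right h.radius_nonneg]

lemma neg_le_energyForm_logCore (h' : IsLogBall V D' v' R' δ) (hDV : D ⊆ intr V) {f : Vtx → ℝ}
    (hf : ∀ x, f x ≤ killedGreen D' v' x) (hfv : 0 ≤ f v) (hfar : R' - 4 ≤ log⁺ ‖v - v'‖) :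
    -99 ≤ energyForm V f (killedGreen (logCore D v (log⁺ ‖v - v'‖)) v) := by
  have hbd (x : Vtx) (hx : log⁺ ‖v - v'‖ - 1 ≤ log⁺ ‖x - v'‖) : f x ≤ 99 := by
    have hmax : max 0 (R' - log⁺ ‖x - v'‖) ≤ 5 := max_le (by norm_num) (by linarith)
    linarith [hf x, h'.killedGreen_le x]
  have hexit := sub_le_energyForm_killedGreen (logCore_subset.trans hDV) (Or.inl (hbd v (by simp)))
    fun x _ e he hx ↦ hbd x (posLog_norm_sub_le_of_add_mem_logCore he hx)
  linarith

-- Near their poles the two Green functions are split off, so that the remaining parts have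
-- bounded energy and the Cauchy-Schwarz inequality applies to them.
lemma le_energyForm_of_far (h : IsLogBall V D v R δ) (h' : IsLogBall V D' v' R' δ)
    (hfar : R - 4 ≤ log⁺ ‖v - v'‖) (hfar' : R' - 4 ≤ log⁺ ‖v - v'‖) :
    -δ - 392 ≤ energyForm V (killedGreen D v) (killedGreen D' v') := by
  have hrev := norm_sub_rev v v'
  set core := killedGreen (logCore D v (log⁺ ‖v - v'‖)) v
  set core' := killedGreen (logCore D' v' (log⁺ ‖v' - v‖)) v'
  have hcore (x : Vtx) (hx : x ∉ intr V) : core x = 0 :=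
    killedGreen_of_notMem fun hc ↦ hx (h.subset (logCore_subset hc))
  have hcore' (x : Vtx) (hx : x ∉ intr V) : core' x = 0 :=
    killedGreen_of_notMem fun hc ↦ hx (h'.subset (logCore_subset hc))
  have hpole : -99 ≤ energyForm V (killedGreen D' v') core :=
    h'.neg_le_energyForm_logCore h.subset (fun _ ↦ le_rfl) (killedGreen_nonneg _ _ _) hfar'
  have hpole' : -99 ≤ energyForm V (killedGreen D v - core) core' :=
    h.neg_le_energyForm_logCore h'.subset
      (fun x ↦ sub_le_self _ (killedGreen_nonneg _ _ _))
      (sub_nonneg.2 (killedGreen_mono logCore_subset _ _)) (hrev ▸ hfar)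
  have hrest : -((energyForm V (killedGreen D v - core) (killedGreen D v - core) +
      energyForm V (killedGreen D' v' - core') (killedGreen D' v' - core')) / 2) ≤
        energyForm V (killedGreen D v - core) (killedGreen D' v' - core') :=
    neg_half_add_le_energyForm
      (fun x hx ↦ by rw [Pi.sub_apply, h.killedGreen_eq_zero_off x hx, hcore x hx, sub_zero])
      fun x hx ↦ by rw [Pi.sub_apply, h'.killedGreen_eq_zero_off x hx, hcore' x hx, sub_zero]
  have hcomm : energyForm V (killedGreen D' v') core = energyForm V core (killedGreen D' v') :=
    energyForm_comm (fun x hx ↦ h'.killedGreen_eq_zero_off x fun hi ↦ hx (intr_subset V hi))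
      fun x hx ↦ hcore x fun hi ↦ hx (intr_subset V hi)
  have hsplit : energyForm V (killedGreen D v) (killedGreen D' v') =
      energyForm V core (killedGreen D' v') + energyForm V (killedGreen D v - core) core' +
        energyForm V (killedGreen D v - core) (killedGreen D' v' - core') := by
    simp only [map_sub, LinearMap.sub_apply]
    ring
  linarith [h.energyForm_sub_logCore_self_le hfar,
    h'.energyForm_sub_logCore_self_le (L := log⁺ ‖v' - v‖) (hrev ▸ hfar')]

lemma abs_energyForm_sub_max_le (h : IsLogBall V D v R δ) (h' : IsLogBall V D' v' R' δ)
    (hR : R' ≤ R) :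
    |energyForm V (killedGreen D v) (killedGreen D' v') - max 0 (R' - log⁺ ‖v - v'‖)| ≤
      δ + 396 := by
  refine abs_sub_le_iff.2 ⟨?_, ?_⟩
  · linarith [h.energyForm_killedGreen_le_max h', h.defect_nonneg]
  rcases le_total (log⁺ ‖v - v'‖) (R - 4) with hnear | hfar
  · linarith [h.le_energyForm_of_near h' hR hnear]
  · have hmax : max 0 (R' - log⁺ ‖v - v'‖) ≤ 4 := max_le (by norm_num) (by linarith)
    linarith [h.le_energyForm_of_far h' hfar (by linarith)]

end IsLogBall

end LogBall

/-! ### The scale boxes -/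

noncomputable section ScaleBox

open Real

variable {N : ℕ} {v v' w x : Vtx} {s lam l l' ρ : ℝ}

lemma norm_intPair_le_iff {r : ℝ} : ‖x‖ ≤ r ↔ |(x.1 : ℝ)| ≤ r ∧ |(x.2 : ℝ)| ≤ r := by
  rw [norm_prod_le_iff, Int.norm_eq_abs, Int.norm_eq_abs]

lemma posLog_rpow_natCast (hN : 1 ≤ N) (hs : 0 ≤ s) : log⁺ ((N : ℝ) ^ s) = s * log N := by
  have hN' : (1 : ℝ) ≤ N := mod_cast hN
  rw [posLog_eq_log ((one_le_rpow hN' hs).trans (le_abs_self _)), log_rpow (by positivity)]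

lemma posLog_le_of_le_rpow (hN : 1 ≤ N) (hs : 0 ≤ s) (hx : ‖x‖ ≤ (N : ℝ) ^ s) :
    log⁺ ‖x‖ ≤ s * log N :=
  posLog_rpow_natCast hN hs ▸ posLog_le_posLog (norm_nonneg _) hx

lemma sub_one_le_posLog_of_rpow_div_two_le (hN : 1 ≤ N) (hx : (N : ℝ) ^ s / 2 ≤ ‖x‖) :
    s * log N - 1 ≤ log⁺ ‖x‖ := by
  have hpow : 0 < (N : ℝ) ^ s := by positivity
  calc s * log N - 1
      ≤ log ((N : ℝ) ^ s / 2) := by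
        rw [log_div hpow.ne' two_ne_zero, log_rpow (by positivity)]
        linarith [log_two_lt_d9]
    _ ≤ log ‖x‖ := log_le_log (by positivity) hx
    _ ≤ log⁺ ‖x‖ := le_max_right _ _

lemma nbhd_zero (N : ℕ) (v : Vtx) : nbhd N 0 v = VN N := if_pos rfl

lemma mem_nbhd (hv : v ∈ VN N) (hlam : lam ≠ 0) :
    w ∈ nbhd N lam v ↔ w ∈ VN N ∧ ‖w - v‖ ≤ (N : ℝ) ^ (1 - lam) / 2 := by
  rw [norm_intPair_le_iff, nbhd, if_neg hlam, Prod.fst_sub, Prod.snd_sub, Int.cast_sub,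
    Int.cast_sub]
  by_cases hone : lam = 1
  · have hint (a b : ℤ) (h : |(a : ℝ) - b| ≤ 1 / 2) : a = b := by
      have : |a - b| < 1 := by exact_mod_cast h.trans_lt (by norm_num : (1 / 2 : ℝ) < 1)
      exact sub_eq_zero.1 (Int.abs_lt_one_iff.1 this)
    rw [if_pos hone, hone, sub_self, rpow_zero, Finset.mem_singleton]
    refine ⟨?_, fun ⟨_, h₁, h₂⟩ ↦ Prod.ext (hint _ _ h₁) (hint _ _ h₂)⟩
    rintro rfl
    simp [hv]
  · rw [if_neg hone, Finset.mem_filter]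

lemma nbhd_subset (hv : v ∈ VN N) (lam : ℝ) : nbhd N lam v ⊆ VN N := by
  by_cases hlam : lam = 0
  · rw [hlam, nbhd_zero]
  · exact fun w hw ↦ ((mem_nbhd hv hlam).1 hw).1

lemma nbhd_anti (hN : 1 ≤ N) (hv : v ∈ VN N) (hl : 0 ≤ l) (hll' : l ≤ l') :
    nbhd N l' v ⊆ nbhd N l v := by
  rcases hl.eq_or_lt with rfl | hpos
  · exact nbhd_zero N v ▸ nbhd_subset hv l'
  · intro w hw
    rw [mem_nbhd hv (hpos.trans_le hll').ne'] at hw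
    refine (mem_nbhd hv hpos.ne').2 ⟨hw.1, hw.2.trans ?_⟩
    gcongr
    exact mod_cast hN

lemma norm_sub_le_of_mem_nbhd (hv : v ∈ VN N) (hw : w ∈ nbhd N lam v) :
    ‖w - v‖ ≤ (N : ℝ) ^ (1 - lam) := by
  by_cases hlam : lam = 0
  · have hwv := Finset.mem_Icc.1 (nbhd_subset hv lam hw)
    have hvv := Finset.mem_Icc.1 hv
    simp only [Prod.le_def] at hwv hvv
    rw [hlam, sub_zero, rpow_one, norm_intPair_le_iff]
    norm_cast
    rw [abs_le, abs_le, Prod.fst_sub, Prod.snd_sub]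
    lia
  · exact ((mem_nbhd hv hlam).1 hw).2.trans (half_le_self (by positivity))

lemma posLog_norm_sub_le_of_mem_nbhd (hN : 1 ≤ N) (hv : v ∈ VN N) (hlam : lam ≤ 1)
    (hw : w ∈ nbhd N lam v) : log⁺ ‖w - v‖ ≤ (1 - lam) * log N :=
  posLog_le_of_le_rpow hN (sub_nonneg.2 hlam) (norm_sub_le_of_mem_nbhd hv hw)

lemma le_posLog_norm_sub_of_notMem_nbhd (hN : 1 ≤ N) (hv : v ∈ VN N) (hw : w ∈ VN N)
    (hwv : w ∉ nbhd N lam v) : (1 - lam) * log N - 1 ≤ log⁺ ‖w - v‖ := by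
  have hlam : lam ≠ 0 := by
    rintro rfl
    exact hwv (nbhd_zero N v ▸ hw)
  refine sub_one_le_posLog_of_rpow_div_two_le hN ?_
  by_contra! hlt
  exact hwv ((mem_nbhd hv hlam).2 ⟨hw, hlt.le⟩)

lemma AN_subset (N : ℕ) (ρ : ℝ) : AN N ρ ⊆ VN N := Finset.filter_subset _ _

lemma le_posLog_norm_sub_of_mem_AN (hN : 1 ≤ N) (hv : v ∈ AN N ρ) (hw : w ∉ VN N) :
    (1 - ρ) * log N - 1 ≤ log⁺ ‖w - v‖ := by
  refine sub_one_le_posLog_of_rpow_div_two_le hN ?_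
  have hdist := (Finset.mem_filter.1 hv).2 w hw
  obtain ⟨h₁, h₂⟩ := norm_intPair_le_iff.1 (le_refl ‖w - v‖)
  rw [Prod.fst_sub, Int.cast_sub, abs_sub_comm] at h₁
  rw [Prod.snd_sub, Int.cast_sub, abs_sub_comm] at h₂
  have hsqrt : √(((v.1 : ℝ) - w.1) ^ 2 + ((v.2 : ℝ) - w.2) ^ 2) ≤ 2 * ‖w - v‖ := by
    rw [sqrt_le_left (by positivity)]
    nlinarith [sq_le_sq' (neg_le_of_abs_le h₁) (le_of_abs_le h₁),
      sq_le_sq' (neg_le_of_abs_le h₂) (le_of_abs_le h₂)]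
  linarith

lemma le_posLog_of_notMem_intr {B : Finset Vtx} {S : ℝ} (hw : w ∉ intr B)
    (hself : w ∉ B → S ≤ log⁺ ‖w - v‖)
    (hnbr : ∀ e ∈ unitSteps, w + e ∉ B → S ≤ log⁺ ‖w + e - v‖) : S - 1 ≤ log⁺ ‖w - v‖ := by
  by_cases hwB : w ∈ B
  · obtain ⟨e, he, hwe⟩ : ∃ e ∈ unitSteps, w + e ∉ B := by
      by_contra! hall
      exact hw (mem_intr.2 ⟨hwB, hall⟩)
    have hstep := posLog_norm_sub_le_of_unitStep (neg_mem_unitSteps he) (w + e) v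
    rw [add_neg_cancel_right] at hstep
    linarith [hnbr e he hwe]
  · linarith [hself hwB]

lemma isLogBall_scaleBox (hN : 1 ≤ N) (hv : v ∈ AN N ρ) (hρ : 0 ≤ ρ) (hlam : lam ∈ Set.Icc 0 1) :
    IsLogBall (VN N) (intr (nbhd N lam v)) v ((1 - lam) * log N) (ρ * log N + 2) where
  subset := intr_mono (nbhd_subset (AN_subset N ρ hv) lam)
  radius_nonneg := mul_nonneg (sub_nonneg.2 hlam.2) (log_natCast_nonneg N)
  defect_nonneg := add_nonneg (mul_nonneg hρ (log_natCast_nonneg N)) zero_le_two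
  outer _ hx e he :=
    posLog_norm_sub_le_of_mem_nbhd hN (AN_subset N ρ hv) hlam.2 ((mem_intr.1 hx).2 e he)
  inner w hw hwD := by
    have hout (u : Vtx) (hu : u ∈ VN N) (hun : u ∉ nbhd N lam v) :=
      le_posLog_norm_sub_of_notMem_nbhd hN (AN_subset N ρ hv) hu hun
    have hw' := mem_intr.1 hw
    linarith [le_posLog_of_notMem_intr hwD (hout w hw'.1) fun e he ↦ hout (w + e) (hw'.2 e he)]
  inner_defect w hwD := by
    have hlog := log_natCast_nonneg N
    have hout (u : Vtx) (hun : u ∉ nbhd N lam v) :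
        (1 - lam) * log N - ρ * log N - 1 ≤ log⁺ ‖u - v‖ := by
      by_cases hu : u ∈ VN N
      · linarith [le_posLog_norm_sub_of_notMem_nbhd hN (AN_subset N ρ hv) hu hun,
          mul_nonneg hρ hlog]
      · linarith [le_posLog_norm_sub_of_mem_AN hN hv hu, mul_nonneg hlam.1 hlog]
    linarith [le_posLog_of_notMem_intr hwD (hout w) fun e _ ↦ hout (w + e)]

lemma bScale_comm (N : ℕ) (v v' : Vtx) : bScale N v v' = bScale N v' v := by
  simp only [bScale, Finset.inter_comm]

lemma bScale_nonneg (N : ℕ) (v v' : Vtx) : 0 ≤ bScale N v v' :=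
  sSup_nonneg fun _ h ↦ h.1.1

lemma le_bScale (hs : s ∈ Set.Icc 0 1) (hw : w ∈ nbhd N s v) (hw' : w ∈ nbhd N s v') :
    s ≤ bScale N v v' :=
  le_csSup ⟨1, fun _ h ↦ h.1.2⟩ ⟨hs, w, Finset.mem_inter.2 ⟨hw, hw'⟩⟩

lemma bScale_mul_log_le (hN : 1 ≤ N) (hv : v ∈ VN N) (hv' : v' ∈ VN N) :
    bScale N v v' * log N ≤ log N - log⁺ ‖v - v'‖ + 1 := by
  have hmeet (s : ℝ) (hs : s ≤ 1) (w : Vtx) (hw : w ∈ nbhd N s v) (hw' : w ∈ nbhd N s v') :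
      s * log N ≤ log N - log⁺ ‖v - v'‖ + 1 := by
    have htri := posLog_norm_sub_le_one_add_max v w v'
    rw [norm_sub_rev v w] at htri
    linarith [max_le (posLog_norm_sub_le_of_mem_nbhd hN hv hs hw)
      (posLog_norm_sub_le_of_mem_nbhd hN hv' hs hw')]
  rcases (log_natCast_nonneg N).eq_or_lt with hlog | hlog
  · simpa only [← hlog, mul_zero] using
      hmeet 0 zero_le_one v ((nbhd_zero N v).symm ▸ hv) ((nbhd_zero N v').symm ▸ hv)
  rw [← le_div_iff₀ hlog]
  refine csSup_le ⟨0, ⟨le_rfl, zero_le_one⟩, v, ?_⟩ fun s ⟨hs, w, hw⟩ ↦ ?_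
  · rw [nbhd_zero, nbhd_zero, Finset.inter_self]
    exact hv
  · obtain ⟨hwv, hwv'⟩ := Finset.mem_inter.1 hw
    exact (le_div_iff₀ hlog).2 (hmeet s hs.2 w hwv hwv')

lemma le_bScale_mul_log (hN : 2 ≤ N) (hv : v ∈ VN N) (hv' : v' ∈ VN N) :
    log N - log⁺ ‖v - v'‖ - 1 ≤ bScale N v v' * log N := by
  have hlog : 0 < log N := log_pos (mod_cast hN)
  set s := (log N - log⁺ ‖v - v'‖ - 1) / log N
  have hsN : s * log N = log N - log⁺ ‖v - v'‖ - 1 := div_mul_cancel₀ _ hlog.ne'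
  rw [← hsN]
  gcongr
  rcases le_or_gt s 0 with hneg | hpos
  · exact hneg.trans (bScale_nonneg N v v')
  have hs1 : s ≤ 1 := (div_le_one hlog).2 (by linarith [posLog_nonneg (x := ‖v - v'‖)])
  have hpow : (N : ℝ) ^ (1 - s) = exp (log⁺ ‖v - v'‖ + 1) := by
    rw [rpow_def_of_pos (by positivity)]
    congr 1
    linarith
  have hclose : ‖v - v'‖ ≤ (N : ℝ) ^ (1 - s) / 2 := by
    have hle : ‖v - v'‖ ≤ exp (log⁺ ‖v - v'‖) :=
      (le_exp_log _).trans (exp_le_exp.2 (le_max_right _ _))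
    rw [hpow, exp_add]
    nlinarith [add_one_le_exp (1 : ℝ), exp_pos (log⁺ ‖v - v'‖)]
  refine le_bScale ⟨hpos.le, hs1⟩ ((mem_nbhd (w := v) hv hpos.ne').2 ⟨hv, ?_⟩)
    ((mem_nbhd hv' hpos.ne').2 ⟨hv, hclose⟩)
  rw [sub_self, norm_zero]
  positivity

/-- The Green function with pole `v` of the interior of the scale box `[v]_λ`. -/
def scaleGreen (N : ℕ) (lam : ℝ) (v : Vtx) : Vtx → ℝ := killedGreen (intr (nbhd N lam v)) v

lemma abs_energyForm_scaleGreen_sub_le (hN : 2 ≤ N) (hρ : 0 ≤ ρ) (hv : v ∈ AN N ρ)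
    (hv' : v' ∈ AN N ρ) (hl : l ∈ Set.Icc 0 1) (hl' : l' ∈ Set.Icc 0 1) :
    |energyForm (VN N) (scaleGreen N l v) (scaleGreen N l' v') -
      max 0 (bScale N v v' - max l l') * log N| ≤ ρ * log N + 400 := by
  have hN1 : 1 ≤ N := one_le_two.trans hN
  have hball := isLogBall_scaleBox hN1 hv hρ hl
  have hball' := isLogBall_scaleBox hN1 hv' hρ hl'
  wlog hll' : l ≤ l' generalizing l l' v v'
  · rw [scaleGreen, scaleGreen, hball.energyForm_killedGreen_comm hball', bScale_comm, max_comm l]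
    exact this hv' hv hl' hl hball' hball (le_of_not_ge hll')
  have hgreen := hball.abs_energyForm_sub_max_le hball' <|
    mul_le_mul_of_nonneg_right (sub_le_sub_left hll' 1) (log_natCast_nonneg N)
  have hscale : |max 0 ((1 - l') * log N - log⁺ ‖v - v'‖) -
      max 0 (bScale N v v' - l') * log N| ≤ 1 := by
    rw [max_mul_of_nonneg _ _ (log_natCast_nonneg N), zero_mul, max_comm 0, max_comm 0]
    refine (abs_max_sub_max_le_abs _ _ _).trans (abs_le.2 ?_)
    constructor <;>
    linarith [bScale_mul_log_le hN1 (AN_subset N ρ hv) (AN_subset N ρ hv'),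
      le_bScale_mul_log hN (AN_subset N ρ hv) (AN_subset N ρ hv')]
  rw [max_eq_right hll']
  exact (abs_sub_le _ (max 0 ((1 - l') * log N - log⁺ ‖v - v'‖)) _).trans
    ((add_le_add hgreen hscale).trans (by linarith))

end ScaleBox

/-! ### Linear functionals of the Gaussian free field -/

noncomputable section FieldFunctionals

open MeasureTheory ProbabilityTheory

/-- The linear functional `ω ↦ Σ_{v∈V} c(v)·ω(v)` of the field, linear also in the coefficients
`c`. -/
def coordSum (V : Finset Vtx) : (Vtx → ℝ) →ₗ[ℝ] FieldSp → ℝ where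
  toFun c ω := ∑ v ∈ V, c v * ω v
  map_add' c d := by ext ω; simp [add_mul, Finset.sum_add_distrib]
  map_smul' a c := by ext ω; simp [mul_assoc, Finset.mul_sum]

/-- The function `Σ_{w∈V} c(w)·G_V(·, w)`, which solves `lap u = c` in the interior of `V` with zero
boundary values. -/
def greenPotential (V : Finset Vtx) (c : Vtx → ℝ) : Vtx → ℝ :=
  ∑ w ∈ V, c w • killedGreen (intr V) w

variable {V : Finset Vtx} {f g : Vtx → ℝ}

lemma coordSum_apply (V : Finset Vtx) (c : Vtx → ℝ) (ω : FieldSp) :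
    coordSum V c ω = ∑ v ∈ V, c v * ω v := rfl

lemma measurable_coordSum (V : Finset Vtx) (c : Vtx → ℝ) : Measurable (coordSum V c) :=
  Finset.measurable_fun_sum _ fun v _ ↦ (measurable_pi_apply v).const_mul _

lemma coordSum_single {v : Vtx} (hv : v ∈ V) : coordSum V (Pi.single v 1) = fun ω ↦ ω v := by
  ext ω
  simp [coordSum_apply, Pi.single_apply, hv]

lemma greenPotential_apply (V : Finset Vtx) (c : Vtx → ℝ) (x : Vtx) :
    greenPotential V c x = ∑ w ∈ V, c w * killedGreen (intr V) w x := by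
  simp [greenPotential]

lemma greenPotential_add (V : Finset Vtx) (c d : Vtx → ℝ) :
    greenPotential V (c + d) = greenPotential V c + greenPotential V d := by
  simp [greenPotential, add_smul, Finset.sum_add_distrib]

lemma greenPotential_of_notMem (c : Vtx → ℝ) : ∀ x ∉ intr V, greenPotential V c x = 0 :=
  fun x hx ↦ by simp [greenPotential_apply, killedGreen_of_notMem hx]

lemma energyForm_greenPotential (hf : ∀ x ∉ intr V, f x = 0) (c : Vtx → ℝ) :
    energyForm V f (greenPotential V c) = ∑ w ∈ V, c w * f w := by
  simp [greenPotential, energyForm_killedGreen (intr_subset V) hf]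

lemma energyForm_comm_of_notMem_intr (hf : ∀ x ∉ intr V, f x = 0) (hg : ∀ x ∉ intr V, g x = 0) :
    energyForm V f g = energyForm V g f :=
  energyForm_comm (fun x hx ↦ hf x (mt (intr_subset V ·) hx))
    fun x hx ↦ hg x (mt (intr_subset V ·) hx)

lemma energyForm_greenPotential_lap (hf : ∀ x ∉ intr V, f x = 0) (c : Vtx → ℝ) :
    energyForm V (greenPotential V c) (greenPotential V (lap f)) = ∑ w ∈ V, c w * f w := by
  have hc := greenPotential_of_notMem (V := V) c
  calc energyForm V (greenPotential V c) (greenPotential V (lap f))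
      = energyForm V (greenPotential V c) f := by
        rw [energyForm_greenPotential hc, energyForm_apply]
        exact Finset.sum_congr rfl fun w _ ↦ mul_comm _ _
    _ = ∑ w ∈ V, c w * f w := by
        rw [energyForm_comm_of_notMem_intr hc hf, energyForm_greenPotential hf]

lemma IsGreenFn.apply_eq_killedGreen {B : Finset Vtx} {G : Vtx → Vtx → ℝ} (h : IsGreenFn B G)
    (x y : Vtx) : G x y = killedGreen (intr B) y x := by
  by_cases hy : y ∈ intr B
  · refine congrFun (eq_killedGreen (g := (G · y)) (fun x hx ↦ h.1 x y (.inl hx))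
      fun x hx ↦ ?_) x
    rw [lap_eq_iff, nbrAvg_eq, h.2 y hy x hx]
    simp [Pi.single_apply]
  · rw [killedGreen_eq_zero hy, h.1 x y (.inr hy), Pi.zero_apply]

end FieldFunctionals

noncomputable section GaussianFreeField

open MeasureTheory ProbabilityTheory

variable {N : ℕ} {P : Measure FieldSp} {v : Vtx} {l : ℝ} {f g : Vtx → ℝ}

namespace IsGFF

lemma hasLaw_coordSum (h : IsGFF N P) (c : Vtx → ℝ) :
    HasLaw (coordSum (VN N) c) (gaussianReal 0 (energyForm (VN N)
      (greenPotential (VN N) c) (greenPotential (VN N) c)).toNNReal) P where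
  aemeasurable := (measurable_coordSum _ c).aemeasurable
  map_eq := by
    obtain ⟨-, G, hG, hc⟩ := h
    rw [energyForm_greenPotential (greenPotential_of_notMem c)]
    simp only [greenPotential_apply, Finset.mul_sum, ← hG.apply_eq_killedGreen, ← mul_assoc]
    exact hc c

lemma hasGaussianLaw_coordSum (h : IsGFF N P) (c : Vtx → ℝ) :
    HasGaussianLaw (coordSum (VN N) c) P :=
  ⟨by rw [(h.hasLaw_coordSum c).map_eq]; infer_instance⟩

lemma integral_coordSum (h : IsGFF N P) (c : Vtx → ℝ) : P[coordSum (VN N) c] = 0 := by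
  rw [(h.hasLaw_coordSum c).integral_eq, integral_id_gaussianReal]

lemma variance_coordSum (h : IsGFF N P) (c : Vtx → ℝ) :
    Var[coordSum (VN N) c; P] =
      energyForm (VN N) (greenPotential (VN N) c) (greenPotential (VN N) c) := by
  rw [(h.hasLaw_coordSum c).variance_eq, variance_id_gaussianReal,
    Real.coe_toNNReal _ (energyForm_self_nonneg (greenPotential_of_notMem c))]

lemma covariance_coordSum (h : IsGFF N P) (c d : Vtx → ℝ) :
    cov[coordSum (VN N) c, coordSum (VN N) d; P] =
      energyForm (VN N) (greenPotential (VN N) c) (greenPotential (VN N) d) := by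
  have := h.1
  have hvar := variance_add (h.hasGaussianLaw_coordSum c).memLp_two
    (h.hasGaussianLaw_coordSum d).memLp_two
  rw [← map_add, h.variance_coordSum, greenPotential_add] at hvar
  have hcomm := energyForm_comm_of_notMem_intr (V := VN N) (greenPotential_of_notMem c)
    (greenPotential_of_notMem d)
  simp only [h.variance_coordSum, map_add, LinearMap.add_apply, ← hcomm] at hvar
  linarith

lemma covariance_coordSum_lap (h : IsGFF N P) (hf : ∀ x ∉ intr (VN N), f x = 0) (c : Vtx → ℝ) :
    cov[coordSum (VN N) c, coordSum (VN N) (lap f); P] = ∑ w ∈ VN N, c w * f w := by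
  rw [h.covariance_coordSum, energyForm_greenPotential_lap hf]

lemma integral_coordSum_lap_mul (h : IsGFF N P) (hf : ∀ x ∉ intr (VN N), f x = 0)
    (hg : ∀ x ∉ intr (VN N), g x = 0) :
    ∫ ω, coordSum (VN N) (lap f) ω * coordSum (VN N) (lap g) ω ∂P = energyForm (VN N) f g := by
  have := h.1
  have hcov := covariance_eq_sub (h.hasGaussianLaw_coordSum (lap f)).memLp_two
    (h.hasGaussianLaw_coordSum (lap g)).memLp_two
  rw [h.covariance_coordSum_lap hg, h.integral_coordSum, zero_mul, sub_zero] at hcov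
  rw [energyForm_comm_of_notMem_intr hf hg, energyForm_apply]
  simpa only [mul_comm, Pi.mul_apply] using hcov.symm

lemma isGaussianProcess_coordSum (h : IsGFF N P) :
    IsGaussianProcess (fun c ↦ coordSum (VN N) c) P where
  hasGaussianLaw I := ⟨isGaussian_of_map_eq_gaussianReal fun L ↦ by
    set c : Vtx → ℝ := ∑ i : I, L (Pi.single i 1) • (i : Vtx → ℝ)
    refine ⟨_, _, (Eq.trans ?_ (h.hasLaw_coordSum c).map_eq :)⟩
    have hmeas : Measurable fun ω ↦ I.restrict fun c ↦ coordSum (VN N) c ω :=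
      measurable_pi_lambda _ fun i ↦ measurable_coordSum _ i
    rw [Measure.map_map (by fun_prop) hmeas]
    congr 1
    ext ω
    simp only [Function.comp_apply, c, map_sum, map_smul, Finset.sum_apply, Pi.smul_apply]
    conv_lhs => rw [pi_eq_sum_univ' (Finset.restrict I fun c ↦ coordSum (VN N) c ω)]
    simp [mul_comm]⟩

end IsGFF

lemma scaleAlg_le (N : ℕ) (l : ℝ) (v : Vtx) : scaleAlg N l v ≤ MeasurableSpace.pi :=
  iSup₂_le fun w _ ↦ (measurable_pi_apply w).comap_le

lemma measurable_coordSum_scaleAlg {c : Vtx → ℝ} (hc : ∀ x ∈ intr (nbhd N l v), c x = 0) :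
    Measurable[scaleAlg N l v] (coordSum (VN N) c) := by
  refine Finset.measurable_fun_sum (m := scaleAlg N l v) _ fun w hw ↦ ?_
  by_cases hwD : w ∈ intr (nbhd N l v)
  · simp only [hc w hwD, zero_mul, measurable_const]
  · refine Measurable.const_mul ?_ _
    exact measurable_iff_comap_le.2 (le_iSup₂_of_le w ⟨hw, hwD⟩ le_rfl)

namespace IsGFF

lemma indep_coordSum_lap_scaleAlg (h : IsGFF N P) (hv : v ∈ VN N)
    (hf : ∀ x ∉ intr (nbhd N l v), f x = 0) :
    Indep (MeasurableSpace.comap (coordSum (VN N) (lap f)) inferInstance) (scaleAlg N l v) P := by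
  let T := {w : Vtx // w ∈ VN N ∧ w ∉ intr (nbhd N l v)}
  let Y : T → FieldSp → ℝ := fun t ↦ coordSum (VN N) (Pi.single t.1 1)
  have hY (t : T) : Y t = fun ω ↦ ω t := coordSum_single t.2.1
  have hfV : ∀ x ∉ intr (VN N), f x = 0 := fun x hx ↦
    hf x (mt (intr_mono (nbhd_subset hv l) ·) hx)
  have hcov (_ : Unit) (t : T) : cov[coordSum (VN N) (lap f), Y t; P] = 0 := by
    rw [covariance_comm, h.covariance_coordSum_lap hfV]
    exact Finset.sum_eq_zero fun w _ ↦ by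
      rcases eq_or_ne w t with rfl | hw
      · rw [hf _ t.2.2, mul_zero]
      · rw [Pi.single_eq_of_ne hw, zero_mul]
  have hindep : IndepFun (fun ω (_ : Unit) ↦ coordSum (VN N) (lap f) ω) (fun ω t ↦ Y t ω) P := by
    refine IsGaussianProcess.indepFun_of_covariance_eq_zero
      (X := fun _ : Unit ↦ coordSum (VN N) (lap f)) ?_
      (fun _ ↦ (measurable_coordSum _ _).aemeasurable)
      (fun _ ↦ (measurable_coordSum _ _).aemeasurable) hcov
    have hjoint := h.isGaussianProcess_coordSum.comp_right
      (Sum.elim (fun _ : Unit ↦ lap f) fun t : T ↦ Pi.single t.1 1)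
    rwa [Sum.comp_elim] at hjoint
  refine indep_of_indep_of_le_left (indep_of_indep_of_le_right
    ((IndepFun_iff_Indep _ _ _).1 hindep) (iSup₂_le fun w hw ↦ ?_)) ?_
  · rw [← hY ⟨w, hw⟩]
    exact ((measurable_pi_apply (⟨w, hw⟩ : T)).comp (comap_measurable fun ω t ↦ Y t ω)).comap_le
  · exact ((measurable_pi_apply ()).comp
      (comap_measurable fun ω (_ : Unit) ↦ coordSum (VN N) (lap f) ω)).comap_le

lemma condExp_coordSum_add_lap (h : IsGFF N P) (hv : v ∈ VN N) {c : Vtx → ℝ}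
    (hc : ∀ x ∈ intr (nbhd N l v), c x = 0) (hf : ∀ x ∉ intr (nbhd N l v), f x = 0) :
    P[coordSum (VN N) (c + lap f) | scaleAlg N l v] =ᵐ[P] coordSum (VN N) c := by
  have := h.1
  have hint (c : Vtx → ℝ) := (h.hasGaussianLaw_coordSum c).integrable
  have hindep := condExp_indep_eq (measurable_coordSum _ (lap f)).comap_le (scaleAlg_le N l v)
    (comap_measurable _).stronglyMeasurable (h.indep_coordSum_lap_scaleAlg hv hf)
  rw [map_add]
  refine (condExp_add (hint c) (hint (lap f)) _).trans ?_
  rw [condExp_of_stronglyMeasurable (scaleAlg_le N l v)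
    (measurable_coordSum_scaleAlg hc).stronglyMeasurable (hint c)]
  filter_upwards [hindep] with ω hω
  rw [Pi.add_apply, hω, h.integral_coordSum, add_zero]

end IsGFF

end GaussianFreeField

/-! ### The variance profile -/

noncomputable section VarianceProfile

open MeasureTheory Set

/-- The jump `σ_{i+1} − σ_i` of the variance profile at the scale `λ_i`, where `σ_0` and `σ_{M+1}`
are read as `0`. -/
def jump (M : ℕ) (sigv : ℕ → ℝ) (i : ℕ) : ℝ :=
  (if i < M then sigv (i + 1) else 0) - if 0 < i then sigv i else 0

variable {M : ℕ} {sigv lamv : ℕ → ℝ} {i j : ℕ} {a a' b r s t x : ℝ}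

lemma sum_smul_sub_eq_sum_jump_smul {E : Type*} [AddCommGroup E] [Module ℝ E] (M : ℕ)
    (sigv : ℕ → ℝ) (g : ℕ → E) :
    ∑ i ∈ Finset.Icc 1 M, sigv i • (g (i - 1) - g i) =
      ∑ i ∈ Finset.range (M + 1), jump M sigv i • g i := by
  have hleft : ∑ i ∈ Finset.range (M + 1), (if i < M then sigv (i + 1) else 0) • g i =
      ∑ i ∈ Finset.range M, sigv (i + 1) • g i := by
    rw [Finset.sum_range_succ, if_neg (lt_irrefl M), zero_smul, add_zero]
    exact Finset.sum_congr rfl fun i hi ↦ by rw [if_pos (Finset.mem_range.1 hi)]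
  have hright : ∑ i ∈ Finset.range (M + 1), (if 0 < i then sigv i else 0) • g i =
      ∑ i ∈ Finset.range M, sigv (i + 1) • g (i + 1) := by
    simp [Finset.sum_range_succ']
  have hshift := Finset.sum_Ico_add' (fun i ↦ sigv i • (g (i - 1) - g i)) 0 M 1
  simp only [jump, sub_smul, Finset.sum_sub_distrib, hleft, hright]
  rw [← Finset.sum_sub_distrib]
  simpa [← Finset.range_eq_Ico, Finset.Ico_add_one_right_eq_Icc, smul_sub] using hshift.symm

lemma sum_jump (M : ℕ) (sigv : ℕ → ℝ) : ∑ i ∈ Finset.range (M + 1), jump M sigv i = 0 := by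
  simpa using (sum_smul_sub_eq_sum_jump_smul M sigv fun _ ↦ (1 : ℝ)).symm

namespace ScaleParams

lemma lamv_le (h : ScaleParams M sigv lamv) (hij : i ≤ j) (hj : j ≤ M) : lamv i ≤ lamv j := by
  induction j, hij using Nat.le_induction with
  | base => exact le_rfl
  | succ k _ ih => exact (ih (by omega)).trans (h.2.2.2.2 k (by omega)).le

lemma lamv_mem_Icc (h : ScaleParams M sigv lamv) (hi : i ≤ M) : lamv i ∈ Icc 0 1 :=
  ⟨h.2.2.1 ▸ h.lamv_le (Nat.zero_le i) hi, h.2.2.2.1 ▸ h.lamv_le hi le_rfl⟩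

lemma min_lamv_mem_Icc (h : ScaleParams M sigv lamv) (hi : i ≤ M) (ha : 0 ≤ a) :
    min (lamv i) a ∈ Icc 0 1 :=
  ⟨le_min (h.lamv_mem_Icc hi).1 ha, min_le_of_left_le (h.lamv_mem_Icc hi).2⟩

lemma stepFn_eq_sum_jump (h : ScaleParams M sigv lamv) (hr : r ≠ 0) :
    stepFn M sigv lamv r =
      ∑ i ∈ Finset.range (M + 1), jump M sigv i * (Ioi (lamv i)).indicator 1 r := by
  rw [stepFn, if_neg hr, zero_add]
  refine Eq.trans ?_ (sum_smul_sub_eq_sum_jump_smul M sigv fun i ↦ (Ioi (lamv i)).indicator 1 r)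
  refine Finset.sum_congr rfl fun i hi ↦ ?_
  have hle : lamv (i - 1) ≤ lamv i := h.lamv_le (i.sub_le 1) (Finset.mem_Icc.1 hi).2
  by_cases h1 : lamv (i - 1) < r
  · by_cases h2 : lamv i < r <;> simp [h1, h2, not_lt.1]
  · have h2 : ¬ lamv i < r := fun h2 ↦ h1 (hle.trans_lt h2)
    simp [h1, h2]

-- Below the truncation level nothing changes, above it the jumps sum to zero.
lemma sum_jump_min_eq_indicator_stepFn (h : ScaleParams M sigv lamv) (hr : r ≠ 0) (a : ℝ) :
    ∑ i ∈ Finset.range (M + 1), jump M sigv i * (Ioi (min (lamv i) a)).indicator 1 r =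
      (Iic a).indicator (stepFn M sigv lamv) r := by
  rcases le_or_gt r a with hra | hra
  · rw [indicator_of_mem (mem_Iic.2 hra), h.stepFn_eq_sum_jump hr]
    simp only [indicator, mem_Ioi, min_lt_iff, hra.not_gt, or_false]
  · rw [indicator_of_notMem (notMem_Iic.2 hra), ← sum_jump M sigv]
    simp [indicator, hra]

end ScaleParams

lemma indicator_Ioi_mul_indicator_Ioi (x y : ℝ) :
    ((Ioi x).indicator 1 * (Ioi y).indicator 1 : ℝ → ℝ) = (Ioi (max x y)).indicator 1 := by
  rw [← inter_indicator_one, Ioi_inter_Ioi]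

lemma intervalIntegrable_indicator_Ioi (x s t : ℝ) :
    IntervalIntegrable ((Ioi x).indicator (1 : ℝ → ℝ)) volume s t :=
  intervalIntegrable_iff.2
    ((integrableOn_const measure_Ioc_lt_top.ne (C := (1 : ℝ))).indicator measurableSet_Ioi)

lemma integral_indicator_Ioi (hx : 0 ≤ x) (hb : 0 ≤ b) :
    ∫ r in (0 : ℝ)..b, (Ioi x).indicator (1 : ℝ → ℝ) r = max 0 (b - x) := by
  rw [intervalIntegral.integral_of_le hb, setIntegral_indicator measurableSet_Ioi,
    Ioc_inter_Ioi, sup_of_le_right hx]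
  simp [max_comm]

section WeightedSum

variable {ι : Type*} {I : Finset ι} {z : ι → ℝ}

lemma intervalIntegrable_sum_mul_indicator_Ioi (I : Finset ι) (c z : ι → ℝ) (s t : ℝ) :
    IntervalIntegrable (fun r ↦ ∑ i ∈ I, c i * (Ioi (z i)).indicator (1 : ℝ → ℝ) r) volume s t :=
  intervalIntegrable_iff.2 <| integrable_finsetSum I fun i _ ↦
    (intervalIntegrable_iff.1 (intervalIntegrable_indicator_Ioi (z i) s t)).const_mul (c i)

lemma integral_sum_mul_indicator_Ioi (hz : ∀ i ∈ I, 0 ≤ z i) (hb : 0 ≤ b) (c : ι → ℝ) :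
    ∫ r in (0 : ℝ)..b, ∑ i ∈ I, c i * (Ioi (z i)).indicator (1 : ℝ → ℝ) r =
      ∑ i ∈ I, c i * max 0 (b - z i) := by
  rw [intervalIntegral.integral_finsetSum
    fun i _ ↦ (intervalIntegrable_indicator_Ioi (z i) 0 b).const_mul (c i)]
  refine Finset.sum_congr rfl fun i hi ↦ ?_
  rw [intervalIntegral.integral_const_mul, integral_indicator_Ioi (hz i hi) hb]

end WeightedSum

lemma Jsig2_nonneg (hs : 0 ≤ s) : 0 ≤ Jsig2 M sigv lamv s :=
  intervalIntegral.integral_nonneg_of_forall hs fun _ ↦ sq_nonneg _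

namespace ScaleParams

lemma sum_jump_mul_jump_indicator (h : ScaleParams M sigv lamv) (hr : r ≠ 0) (a a' : ℝ) :
    ∑ p ∈ Finset.range (M + 1) ×ˢ Finset.range (M + 1), jump M sigv p.1 * jump M sigv p.2 *
      (Ioi (max (min (lamv p.1) a) (min (lamv p.2) a'))).indicator (1 : ℝ → ℝ) r =
      (Iic (min a a')).indicator (fun r ↦ stepFn M sigv lamv r ^ 2) r := by
  simp only [sq]
  rw [← Iic_inter_Iic, inter_indicator_mul, ← h.sum_jump_min_eq_indicator_stepFn hr a,
    ← h.sum_jump_min_eq_indicator_stepFn hr a', Finset.sum_mul_sum, ← Finset.sum_product']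
  refine Finset.sum_congr rfl fun p _ ↦ ?_
  rw [← indicator_Ioi_mul_indicator_Ioi, Pi.mul_apply, mul_mul_mul_comm]

lemma intervalIntegrable_stepFn_sq (h : ScaleParams M sigv lamv) (s t : ℝ) :
    IntervalIntegrable (fun r ↦ stepFn M sigv lamv r ^ 2) volume s t := by
  refine (intervalIntegrable_sum_mul_indicator_Ioi (Finset.range (M + 1) ×ˢ Finset.range (M + 1))
    (fun p ↦ jump M sigv p.1 * jump M sigv p.2)
    (fun p ↦ max (min (lamv p.1) (max s t)) (min (lamv p.2) (max s t))) s t).congr_ae ?_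
  filter_upwards [ae_restrict_of_ae (Measure.ae_ne volume 0), ae_restrict_mem measurableSet_uIoc]
    with r hr hrst
  rw [h.sum_jump_mul_jump_indicator hr (max s t) (max s t), indicator_of_mem]
  simpa using hrst.2

lemma sum_jump_mul_jump_mul_max (h : ScaleParams M sigv lamv) (ha : 0 ≤ a) (ha' : 0 ≤ a')
    (hb : 0 ≤ b) :
    ∑ p ∈ Finset.range (M + 1) ×ˢ Finset.range (M + 1), jump M sigv p.1 * jump M sigv p.2 *
      max 0 (b - max (min (lamv p.1) a) (min (lamv p.2) a')) =
      Jsig2 M sigv lamv (min (min a a') b) := by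
  have hz : ∀ p ∈ Finset.range (M + 1) ×ˢ Finset.range (M + 1),
      0 ≤ max (min (lamv p.1) a) (min (lamv p.2) a') := fun p hp ↦
    le_max_of_le_left (h.min_lamv_mem_Icc
      (Finset.mem_range_succ_iff.1 (Finset.mem_product.1 hp).1) ha).1
  rw [← integral_sum_mul_indicator_Ioi hz hb]
  calc _ = ∫ r in (0 : ℝ)..b, (Iic (min a a')).indicator (fun r ↦ stepFn M sigv lamv r ^ 2) r := by
        refine intervalIntegral.integral_congr_ae (ae_of_all _ fun r hr ↦ ?_)
        rw [uIoc_of_le hb] at hr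
        exact h.sum_jump_mul_jump_indicator hr.1.ne' a a'
    _ = Jsig2 M sigv lamv (min (min a a') b) := by
        rw [intervalIntegral.integral_of_le hb, setIntegral_indicator measurableSet_Iic,
          Ioc_inter_Iic, inf_comm,
          ← intervalIntegral.integral_of_le (le_min (le_min ha ha') hb)]
        rfl

lemma Jsig2_le_Jsig2 (h : ScaleParams M sigv lamv) (hs : 0 ≤ s) (hst : s ≤ t) :
    Jsig2 M sigv lamv s ≤ Jsig2 M sigv lamv t :=
  intervalIntegral.integral_mono_interval le_rfl hs hst (ae_of_all _ fun _ ↦ sq_nonneg _)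
    (h.intervalIntegrable_stepFn_sq 0 t)

lemma Jint2_eq_Jsig2_sub (h : ScaleParams M sigv lamv) (s t : ℝ) :
    Jint2 (fun r ↦ stepFn M sigv lamv r ^ 2) s t =
      Jsig2 M sigv lamv t - Jsig2 M sigv lamv s :=
  (intervalIntegral.integral_interval_sub_left (h.intervalIntegrable_stepFn_sq 0 t)
    (h.intervalIntegrable_stepFn_sq 0 s)).symm

lemma Jsig2_one_pos (h : ScaleParams M sigv lamv) : 0 < Jsig2 M sigv lamv 1 := by
  have hlam : 0 < lamv 1 := h.2.2.1 ▸ h.2.2.2.2 0 h.1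
  refine lt_of_lt_of_le ?_ (h.Jsig2_le_Jsig2 hlam.le (h.lamv_mem_Icc h.1).2)
  refine intervalIntegral.intervalIntegral_pos_of_pos_on (h.intervalIntegrable_stepFn_sq _ _)
    (fun r hr ↦ pow_pos ?_ 2) hlam
  have hterm_nonneg : ∀ i ∈ Finset.Icc 1 M,
      0 ≤ if lamv (i - 1) < r ∧ r ≤ lamv i then sigv i else 0 := fun i hi ↦ by
    split_ifs
    exacts [(h.2.1 i hi).le, le_rfl]
  have h1 : 1 ∈ Finset.Icc 1 M := Finset.mem_Icc.2 ⟨le_rfl, h.1⟩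
  rw [stepFn, if_neg hr.1.ne', zero_add]
  refine Finset.sum_pos' hterm_nonneg ⟨1, h1, ?_⟩
  rw [if_pos ⟨h.2.2.1.trans_lt hr.1, hr.2.le⟩]
  exact h.2.1 1 h1

end ScaleParams

end VarianceProfile

/-! ### Overlaps of the `(σ,λ)`-field -/

noncomputable section Overlap

open MeasureTheory ProbabilityTheory Set

/-- The potential whose associated functional `coordSum (VN N) (lap ·)` of the free field is
`ψ_v(a)`, the scales beyond `a` being collapsed to `a`. -/
def psiPotential (N M : ℕ) (sigv lamv : ℕ → ℝ) (v : Vtx) (a : ℝ) : Vtx → ℝ :=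
  ∑ i ∈ Finset.range (M + 1), jump M sigv i • scaleGreen N (min (lamv i) a) v

variable {N M : ℕ} {sigv lamv : ℕ → ℝ} {P : Measure FieldSp} {v v' x : Vtx} {a a' l ρ : ℝ}

lemma scaleGreen_of_notMem_intr (hv : v ∈ VN N) : ∀ x ∉ intr (VN N), scaleGreen N l v x = 0 :=
  fun _ hx ↦ killedGreen_of_notMem fun hxD ↦ hx (intr_mono (nbhd_subset hv l) hxD)

lemma psiPotential_of_notMem_intr (hv : v ∈ VN N) :
    ∀ x ∉ intr (VN N), psiPotential N M sigv lamv v a x = 0 := fun x hx ↦ by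
  simp [psiPotential, scaleGreen_of_notMem_intr hv x hx]

lemma lap_psiPotential_of_mem (hN : 1 ≤ N) (h : ScaleParams M sigv lamv) (hv : v ∈ VN N)
    (ha : 0 ≤ a) (hx : x ∈ intr (nbhd N a v)) :
    lap (psiPotential N M sigv lamv v a) x = 0 := by
  have hlap : ∀ i ∈ Finset.range (M + 1), lap (scaleGreen N (min (lamv i) a) v) x =
      (Pi.single v 1 : Vtx → ℝ) x := fun i hi ↦
    lap_killedGreen_of_mem (intr_mono (nbhd_anti hN hv
      (h.min_lamv_mem_Icc (Finset.mem_range_succ_iff.1 hi) ha).1 (min_le_right _ _)) hx)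
  simp only [psiPotential, map_sum, map_smul, Finset.sum_apply, Pi.smul_apply, smul_eq_mul]
  rw [Finset.sum_congr rfl fun i hi ↦ by rw [hlap i hi], ← Finset.sum_mul, sum_jump, zero_mul]

lemma psiPotential_one_eq_of_notMem (hN : 1 ≤ N) (h : ScaleParams M sigv lamv) (hv : v ∈ VN N)
    (ha : a ∈ Icc 0 1) (hx : x ∉ intr (nbhd N a v)) :
    psiPotential N M sigv lamv v 1 x = psiPotential N M sigv lamv v a x := by
  simp only [psiPotential, Finset.sum_apply, Pi.smul_apply]
  refine Finset.sum_congr rfl fun i hi ↦ ?_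
  rw [min_eq_left (h.lamv_mem_Icc (Finset.mem_range_succ_iff.1 hi)).2]
  rcases le_total (lamv i) a with hla | hal
  · rw [min_eq_left hla]
  · have hsub : intr (nbhd N (lamv i) v) ⊆ intr (nbhd N a v) :=
      intr_mono (nbhd_anti hN hv ha.1 hal)
    simp only [min_eq_right hal, scaleGreen, killedGreen_of_notMem hx,
      killedGreen_of_notMem fun hxi ↦ hx (hsub hxi)]

lemma IsGFF.phiScale_eq (hP : IsGFF N P) (hv : v ∈ VN N) (l : ℝ) :
    phiScale N P v l =ᵐ[P] coordSum (VN N) (Pi.single v 1 - lap (scaleGreen N l v)) := by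
  have hcond := hP.condExp_coordSum_add_lap (l := l) hv
    (c := Pi.single v 1 - lap (scaleGreen N l v)) (f := scaleGreen N l v)
    (fun x hx ↦ by rw [Pi.sub_apply, scaleGreen, lap_killedGreen_of_mem hx, sub_self])
    fun x hx ↦ killedGreen_of_notMem hx
  rwa [sub_add_cancel, coordSum_single hv] at hcond

lemma IsGFF.psiFld_eq (hP : IsGFF N P) (h : ScaleParams M sigv lamv) (hv : v ∈ VN N) :
    psiFld N M sigv lamv P v =ᵐ[P] coordSum (VN N) (lap (psiPotential N M sigv lamv v 1)) := by
  have hpot : psiPotential N M sigv lamv v 1 = ∑ i ∈ Finset.Icc 1 M,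
      sigv i • (scaleGreen N (lamv (i - 1)) v - scaleGreen N (lamv i) v) := by
    rw [sum_smul_sub_eq_sum_jump_smul M sigv fun i ↦ scaleGreen N (lamv i) v]
    refine Finset.sum_congr rfl fun i hi ↦ ?_
    rw [min_eq_left (h.lamv_mem_Icc (Finset.mem_range_succ_iff.1 hi)).2]
  filter_upwards [ae_all_iff.2 fun i ↦ hP.phiScale_eq hv (lamv i)] with ω hω
  simp only [psiFld, hω, hpot, map_sum, map_smul, map_sub, Finset.sum_apply, Pi.smul_apply,
    Pi.sub_apply, smul_eq_mul, sub_sub_sub_cancel_left]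

lemma IsGFF.psiScale_eq (hN : 1 ≤ N) (hP : IsGFF N P) (h : ScaleParams M sigv lamv)
    (hv : v ∈ VN N) (ha : a ∈ Icc 0 1) :
    psiScale N M sigv lamv P v a =ᵐ[P]
      coordSum (VN N) (lap (psiPotential N M sigv lamv v a)) := by
  have hcond := hP.condExp_coordSum_add_lap (l := a) hv
    (c := lap (psiPotential N M sigv lamv v a))
    (f := psiPotential N M sigv lamv v 1 - psiPotential N M sigv lamv v a)
    (fun x hx ↦ lap_psiPotential_of_mem hN h hv ha.1 hx)
    fun x hx ↦ sub_eq_zero.2 (psiPotential_one_eq_of_notMem hN h hv ha hx)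
  rw [← map_add, add_sub_cancel] at hcond
  exact (condExp_congr_ae (hP.psiFld_eq h hv)).trans hcond

lemma IsGFF.integral_psiInc_mul_psiFld (hN : 1 ≤ N) (hP : IsGFF N P)
    (h : ScaleParams M sigv lamv) (hv : v ∈ VN N) (hv' : v' ∈ VN N) (ha : a ∈ Icc 0 1)
    (ha' : a' ∈ Icc 0 1) :
    ∫ ω, psiInc N M sigv lamv P v a a' ω * psiFld N M sigv lamv P v' ω ∂P =
      energyForm (VN N) (psiPotential N M sigv lamv v a') (psiPotential N M sigv lamv v' 1) -
        energyForm (VN N) (psiPotential N M sigv lamv v a) (psiPotential N M sigv lamv v' 1) := by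
  have hzero : ∀ x ∉ intr (VN N),
      (psiPotential N M sigv lamv v a' - psiPotential N M sigv lamv v a) x = 0 := fun x hx ↦ by
    simp [psiPotential_of_notMem_intr hv x hx]
  rw [← LinearMap.sub_apply, ← map_sub,
    ← hP.integral_coordSum_lap_mul hzero (psiPotential_of_notMem_intr hv')]
  refine integral_congr_ae ?_
  filter_upwards [hP.psiScale_eq hN h hv ha, hP.psiScale_eq hN h hv ha', hP.psiFld_eq h hv']
    with ω hω hω' hψ
  rw [psiInc, hω, hω', hψ, map_sub, map_sub, Pi.sub_apply]

lemma abs_energyForm_psiPotential_sub_le (hN : 2 ≤ N) (h : ScaleParams M sigv lamv) (hρ : 0 ≤ ρ)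
    (hv : v ∈ AN N ρ) (hv' : v' ∈ AN N ρ) (ha : 0 ≤ a) (ha' : 0 ≤ a') :
    |energyForm (VN N) (psiPotential N M sigv lamv v a) (psiPotential N M sigv lamv v' a') -
        Jsig2 M sigv lamv (min (min a a') (bScale N v v')) * Real.log N| ≤
      (∑ i ∈ Finset.range (M + 1), |jump M sigv i|) ^ 2 * (ρ * Real.log N + 400) := by
  have hterm : ∀ p ∈ Finset.range (M + 1) ×ˢ Finset.range (M + 1),
      |energyForm (VN N) (scaleGreen N (min (lamv p.1) a) v)
          (scaleGreen N (min (lamv p.2) a') v') -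
        max 0 (bScale N v v' - max (min (lamv p.1) a) (min (lamv p.2) a')) * Real.log N| ≤
      ρ * Real.log N + 400 := fun p hp ↦ by
    rw [Finset.mem_product, Finset.mem_range_succ_iff, Finset.mem_range_succ_iff] at hp
    exact abs_energyForm_scaleGreen_sub_le hN hρ hv hv' (h.min_lamv_mem_Icc hp.1 ha)
      (h.min_lamv_mem_Icc hp.2 ha')
  have henergy : energyForm (VN N) (psiPotential N M sigv lamv v a)
      (psiPotential N M sigv lamv v' a') =
      ∑ p ∈ Finset.range (M + 1) ×ˢ Finset.range (M + 1), jump M sigv p.1 * jump M sigv p.2 *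
        energyForm (VN N) (scaleGreen N (min (lamv p.1) a) v)
          (scaleGreen N (min (lamv p.2) a') v') := by
    simp [psiPotential, Finset.sum_product_right, Finset.mul_sum, mul_assoc, mul_left_comm]
  rw [henergy, ← h.sum_jump_mul_jump_mul_max ha ha' (bScale_nonneg N v v'), Finset.sum_mul,
    ← Finset.sum_sub_distrib, sq, Finset.sum_mul_sum, ← Finset.sum_product', Finset.sum_mul]
  refine (Finset.abs_sum_le_sum_abs _ _).trans (Finset.sum_le_sum fun p hp ↦ ?_)
  rw [mul_assoc _ (max _ _), ← mul_sub, abs_mul, abs_mul]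
  exact mul_le_mul_of_nonneg_left (hterm p hp) (by positivity)

lemma abs_integral_psiInc_mul_psiFld_sub_le (hN : 2 ≤ N) (hP : IsGFF N P)
    (h : ScaleParams M sigv lamv) (hρ : 0 ≤ ρ) (hv : v ∈ AN N ρ) (hv' : v' ∈ AN N ρ)
    (ha : a ∈ Icc 0 1) (ha' : a' ∈ Icc 0 1) :
    |∫ ω, psiInc N M sigv lamv P v a a' ω * psiFld N M sigv lamv P v' ω ∂P -
        Jint2 (fun r ↦ stepFn M sigv lamv r ^ 2) (min a (bScale N v v'))
          (min a' (bScale N v v')) * Real.log N| ≤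
      2 * (∑ i ∈ Finset.range (M + 1), |jump M sigv i|) ^ 2 * (ρ * Real.log N + 400) := by
  have hE := abs_energyForm_psiPotential_sub_le hN h hρ hv hv' ha.1 zero_le_one
  have hE' := abs_energyForm_psiPotential_sub_le hN h hρ hv hv' ha'.1 zero_le_one
  rw [min_eq_left ha.2, abs_le] at hE
  rw [min_eq_left ha'.2, abs_le] at hE'
  rw [hP.integral_psiInc_mul_psiFld (by omega) h (AN_subset N ρ hv) (AN_subset N ρ hv') ha ha',
    h.Jint2_eq_Jsig2_sub, abs_le]
  constructor <;> linarith

lemma abs_div_add_sub_div_le {E T J L C₀ : ℝ} (hJ : 0 < J) (hL : 0 < L) (hC₀ : 0 ≤ C₀)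
    (hT : T ∈ Icc 0 J) : |E / (J * L + C₀) - T / J| ≤ (|E - T * L| + C₀) / (J * L) := by
  have hratio : |T / J| ≤ 1 := by
    rw [abs_of_nonneg (div_nonneg hT.1 hJ.le)]
    exact div_le_one_of_le₀ hT.2 hJ.le
  have hsplit : E / (J * L + C₀) - T / J = (E - T * L - T / J * C₀) / (J * L + C₀) := by
    have : J * L + C₀ ≠ 0 := by positivity
    field_simp
    ring
  rw [hsplit, abs_div, abs_of_pos (by positivity : 0 < J * L + C₀)]
  gcongr
  · refine (abs_sub _ _).trans (add_le_add_right ?_ _)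
    rw [abs_mul, abs_of_nonneg hC₀]
    exact mul_le_of_le_one_left hC₀ hratio
  · exact le_add_of_nonneg_right hC₀

theorem overlap_increment_estimate_general (h : ScaleParams M sigv lamv) :
    ∃ C : ℝ, 0 < C ∧ ∀ C₀ ≥ 0, ∀ N ≥ 2, ∀ P : Measure FieldSp, IsGFF N P →
      ∀ α α' : ℝ, 0 ≤ α → α ≤ α' → α' ≤ 1 → ∀ ρ ≥ 0, ∀ v ∈ AN N ρ, ∀ v' ∈ AN N ρ,
        |(∫ ω, psiInc N M sigv lamv P v α α' ω * psiFld N M sigv lamv P v' ω ∂P) /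
              (Jsig2 M sigv lamv 1 * Real.log N + C₀) -
            Jint2 (fun r ↦ stepFn M sigv lamv r ^ 2)
                (min α (bScale N v v')) (min α' (bScale N v v')) /
              Jsig2 M sigv lamv 1|
          ≤ C * (1 + C₀) / Real.log N + C * ρ := by
  have hJ := h.Jsig2_one_pos
  set J := Jsig2 M sigv lamv 1
  set K := 2 * (∑ i ∈ Finset.range (M + 1), |jump M sigv i|) ^ 2
  have hK : 0 ≤ K := by positivity
  refine ⟨(400 * K + 1) / J, by positivity, ?_⟩
  intro C₀ hC₀ N hN P hP α α' hα hαα' hα' ρ hρ v hv v' hv'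
  have hL : 0 < Real.log N := Real.log_pos (by exact_mod_cast hN)
  have hb := bScale_nonneg N v v'
  have hT : Jint2 (fun r ↦ stepFn M sigv lamv r ^ 2) (min α (bScale N v v'))
      (min α' (bScale N v v')) ∈ Icc 0 J := by
    have hmin : 0 ≤ min α (bScale N v v') := le_min hα hb
    have hle := min_le_min_right (bScale N v v') hαα'
    rw [h.Jint2_eq_Jsig2_sub]
    exact ⟨sub_nonneg.2 (h.Jsig2_le_Jsig2 hmin hle), (sub_le_self _ (Jsig2_nonneg hmin)).trans
      (h.Jsig2_le_Jsig2 (hmin.trans hle) (min_le_of_left_le hα'))⟩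
  have hE := abs_integral_psiInc_mul_psiFld_sub_le hN hP h hρ hv hv'
    ⟨hα, hαα'.trans hα'⟩ ⟨hα.trans hαα', hα'⟩
  calc _ ≤ (K * (ρ * Real.log N + 400) + C₀) / (J * Real.log N) :=
        (abs_div_add_sub_div_le hJ hL hC₀ hT).trans (by gcongr)
    _ = (400 * K + C₀) / J / Real.log N + K / J * ρ := by field_simp; ring
    _ ≤ _ := by
        gcongr
        · rw [div_mul_eq_mul_div]
          gcongr
          nlinarith [mul_nonneg hK hC₀]
        · linarith

end Overlap

/-- **Corollary (Overlap increment estimate).**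
For `0 ≤ α < α' ≤ 1` and `ρ ∈ (0,1]`, with
`q_{α,α'}^N(v,v') = E[ψ_v(α,α')ψ_{v'}]/(𝒥_{σ²}(1) log N + C₀)`: there are constants
`C₇ = C₇(σ,λ) > 0` and `C₈ = C₈(α,α',σ,λ) > 0` such that for `N` large enough
(dependent on `α,α'`, independent of `ρ` except when `α = 0`),
`max_{v,v'∈A_{N,ρ}} |q_{α,α'}^N(v,v') − 𝒥̄_{σ²}(α ∧ b_N, α' ∧ b_N)| ≤ C₇/√(log N) + C₈ρ`. -/
theorem overlap_increment_estimate
    (M : ℕ) (sigv lamv : ℕ → ℝ) (hparams : ScaleParams M sigv lamv)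
    (P : ℕ → MeasureTheory.Measure FieldSp) (hGFF : ∀ N, IsGFF N (P N))
    (C₀ : ℝ) (hC₀ : IsVarBound M sigv lamv P C₀) :
    ∃ C₇ : ℝ, 0 < C₇ ∧ ∀ α α' : ℝ, 0 ≤ α → α < α' → α' ≤ 1 →
      ∃ C₈ : ℝ, 0 < C₈ ∧ ∃ N₀ : ℝ → ℕ, (α ≠ 0 → ∀ ρ ρ' : ℝ, N₀ ρ = N₀ ρ') ∧
        ∀ ρ : ℝ, 0 < ρ → ρ ≤ 1 → ∀ N ≥ N₀ ρ, ∀ v ∈ AN N ρ, ∀ v' ∈ AN N ρ,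
          |(∫ ω, psiInc N M sigv lamv (P N) v α α' ω * psiFld N M sigv lamv (P N) v' ω ∂(P N)) /
              (Jsig2 M sigv lamv 1 * Real.log N + C₀) -
            Jint2 (fun r => (stepFn M sigv lamv r) ^ 2)
                (min α (bScale N v v')) (min α' (bScale N v v')) /
              Jsig2 M sigv lamv 1|
          ≤ C₇ / Real.sqrt (Real.log N) + C₈ * ρ := by
  obtain ⟨C, hC, hbound⟩ := overlap_increment_estimate_general hparams
  have hC₀pos := hC₀.1
  refine ⟨C * (1 + C₀), by positivity, fun α α' hα hαα' hα' ↦ ⟨C, hC, fun _ ↦ 3, fun _ _ _ ↦ rfl,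
    fun ρ hρ _ N (hN : 3 ≤ N) v hv v' hv' ↦ ?_⟩⟩
  have hlog : 1 ≤ Real.log N := by
    rw [Real.le_log_iff_exp_le (by positivity)]
    exact Real.exp_one_lt_three.le.trans (by exact_mod_cast hN)
  have hsqrt : √(Real.log N) ≤ Real.log N :=
    (Real.sqrt_le_left (zero_le_one.trans hlog)).2 (le_self_pow₀ hlog two_ne_zero)
  refine (hbound C₀ hC₀pos.le N (by omega) (P N) (hGFF N) α α' hα hαα'.le hα' ρ hρ.le v hv v'
    hv').trans ?_
  gcongr
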